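/- arXiv:1311.2171 — 8 statements merged into one kernel-verified Lean document; each statement's English description precedes it below -/
import Mathlib

section
/- Let σ_1,…,σ_n : Ω → H be a holomorphic frame and let A : Ω → M_n(ℂ) be holomorphic. Define the transformed frame σ̃_j(z) := Σ_{i=1}^n A_{ij}(z)·σ_i(z) for 1 ≤ j ≤ n, and let J_k h̃(z) denote the jet Gram matrix built from (σ̃_1,…,σ̃_n) in the same way that J_k h(z) is built from (σ_1,…,σ_n). Then for every z ∈ Ω and every k ≥ 0, J_k h̃(z) = J_k(A)(z)* · J_k h(z) · J_k(A)(z), where * denotes conjugate transpose. -/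
open Matrix

noncomputable section

/-- `jetA k A z` is the paper's matrix `J_k(A)(z)`: in `(k+1)×(k+1)` blocks of size `n×n`, the
`(i,j)` block is `binom(j,i)·A^{(j−i)}(z)` for `i ≤ j` and `0` otherwise. -/
def jetA {n : ℕ} (k : ℕ) (A : ℂ → Matrix (Fin n) (Fin n) ℂ) (z : ℂ) :
    Matrix (Fin (k + 1) × Fin n) (Fin (k + 1) × Fin n) ℂ :=
  Matrix.of fun p q =>
    if (p.1 : ℕ) ≤ (q.1 : ℕ) then
      ((q.1 : ℕ).choose (p.1 : ℕ) : ℂ) *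
        iteratedDeriv ((q.1 : ℕ) - (p.1 : ℕ)) (fun w => A w p.2 q.2) z
    else 0

variable {H : Type*} [NormedAddCommGroup H] [InnerProductSpace ℂ H] [CompleteSpace H]

/-- `⟪x, y⟫` is the Mathlib inner product (conjugate-linear in the first argument);
it equals the paper's inner product `⟨y, x⟩`, which is linear in the first argument. -/
local notation "⟪" x ", " y "⟫" => (inner ℂ x y : ℂ)

/-- `jGram σ N z` is the Gram matrix of the family
`(σ_1(z),…,σ_n(z), σ_1′(z),…,σ_n′(z),…,σ_1^{(N−1)}(z),…,σ_n^{(N−1)}(z))`, with `(a,b)` entry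
equal to `⟨b-th vector, a-th vector⟩_paper = ⟪a-th vector, b-th vector⟫`.  The jet Gram matrix
`J_k h` of the paper is `jGram σ (k+1)`. -/
def jGram {n : ℕ} (σ : Fin n → ℂ → H) (N : ℕ) (z : ℂ) :
    Matrix (Fin N × Fin n) (Fin N × Fin n) ℂ :=
  Matrix.of fun p q =>
    ⟪iteratedDeriv (p.1 : ℕ) (σ p.2) z, iteratedDeriv (q.1 : ℕ) (σ q.2) z⟫

/-- `hMat σ m z` is the paper's matrix `h_m(z)`: its `(i,j)` entry is the determinant of the
`(nm+1)×(nm+1)` matrix whose `(a,b)` entry is `⟨u_b, v_a⟩_paper = ⟪v_a, u_b⟫`, where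
`u` is the family `(σ_1(z),…,σ_n^{(m−1)}(z))` followed by `σ_j^{(m)}(z)` and `v` is the same
family followed by `σ_i^{(m)}(z)`.  (For `m = 0` this is the Gram matrix `h_0 = J_0 h`.) -/
def hMat {n : ℕ} (σ : Fin n → ℂ → H) (m : ℕ) (z : ℂ) : Matrix (Fin n) (Fin n) ℂ :=
  Matrix.of fun i j =>
    (Matrix.of fun a b : (Fin m × Fin n) ⊕ Unit =>
      ⟪Sum.elim (fun lp : Fin m × Fin n => iteratedDeriv (lp.1 : ℕ) (σ lp.2) z)
          (fun _ => iteratedDeriv m (σ i) z) a,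
        Sum.elim (fun lp : Fin m × Fin n => iteratedDeriv (lp.1 : ℕ) (σ lp.2) z)
          (fun _ => iteratedDeriv m (σ j) z) b⟫).det

/-- Leibniz rule for iterated derivatives of a scalar multiple at a point, with the derivatives of
the vector-valued factor listed in increasing order. -/
theorem iteratedDeriv_fun_smul_eq_sum {E : Type*} [NormedAddCommGroup E] [NormedSpace ℂ E]
    {f : ℂ → ℂ} {g : ℂ → E} {z : ℂ} {m : ℕ} (hf : ContDiffAt ℂ m f z) (hg : ContDiffAt ℂ m g z) :
    iteratedDeriv m (fun w => f w • g w) z = ∑ r ∈ Finset.range (m + 1),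
      ((m.choose r : ℂ) * iteratedDeriv (m - r) f z) • iteratedDeriv r g z := by
  have h := iteratedDerivWithin_smul (Set.mem_univ z) uniqueDiffOn_univ
    hf.contDiffWithinAt hg.contDiffWithinAt
  simp only [iteratedDerivWithin_univ] at h
  change iteratedDeriv m (f • g) z = _
  rw [h, ← Finset.sum_range_reflect]
  refine Finset.sum_congr rfl fun r hr => ?_
  have hr' : r ≤ m := Nat.lt_succ_iff.mp (Finset.mem_range.mp hr)
  rw [Nat.add_sub_cancel, Nat.sub_sub_self hr', Nat.choose_symm hr', mul_smul,
    Nat.cast_smul_eq_nsmul]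

/-- The jets of the transformed frame are the combinations of the jets of the original frame with
coefficients in the columns of `jetA k A z`. -/
theorem iteratedDeriv_frame_change {n k : ℕ} {E : Type*} [NormedAddCommGroup E] [NormedSpace ℂ E]
    {σ : Fin n → ℂ → E} {A : ℂ → Matrix (Fin n) (Fin n) ℂ} {z : ℂ}
    (hσ : ∀ i, ∀ m : ℕ, ContDiffAt ℂ m (σ i) z)
    (hA : ∀ i j, ∀ m : ℕ, ContDiffAt ℂ m (fun w => A w i j) z) (q : Fin (k + 1) × Fin n) :
    iteratedDeriv (q.1 : ℕ) (fun w => ∑ i, A w i q.2 • σ i w) z =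
      ∑ p, jetA k A z p q • iteratedDeriv (p.1 : ℕ) (σ p.2) z := by
  rw [iteratedDeriv_fun_sum fun i _ => (hA i q.2 _).fun_smul (hσ i _),
    Fintype.sum_prod_type_right]
  refine Finset.sum_congr rfl fun i _ => ?_
  rw [iteratedDeriv_fun_smul_eq_sum (hA i q.2 _) (hσ i _)]
  simp only [jetA, Matrix.of_apply, ite_smul, zero_smul]
  rw [Fin.sum_univ_eq_sum_range (fun r => if r ≤ (q.1 : ℕ) then
    (((q.1 : ℕ).choose r : ℂ) * iteratedDeriv ((q.1 : ℕ) - r) (fun w => A w i q.2) z) •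
      iteratedDeriv r (σ i) z else 0) (k + 1), ← Finset.sum_filter]
  refine Finset.sum_congr ?_ fun _ _ => rfl
  ext r
  simp only [Finset.mem_range, Finset.mem_filter]
  omega

/-- Transformation rule of the jet Gram matrix under a holomorphic change of frame:
if `σ̃_j = Σ_i A_{ij}·σ_i`, then `J_k h̃(z) = J_k(A)(z)* · J_k h(z) · J_k(A)(z)`
for every `z ∈ Ω` and every `k ≥ 0`. -/
theorem stmt3 {n : ℕ} (Ω : Set ℂ) (hΩ : IsOpen Ω)
    (σ : Fin n → ℂ → H) (hσ : ∀ i, DifferentiableOn ℂ (σ i) Ω)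
    (A : ℂ → Matrix (Fin n) (Fin n) ℂ)
    (hA : ∀ i j, DifferentiableOn ℂ (fun z => A z i j) Ω) :
    ∀ z ∈ Ω, ∀ k : ℕ,
      jGram (fun j w => ∑ i, A w i j • σ i w) (k + 1) z =
        (jetA k A z)ᴴ * jGram σ (k + 1) z * jetA k A z := by
  intro z hz k
  have hσz : ∀ i, ∀ m : ℕ, ContDiffAt ℂ m (σ i) z := fun i _ =>
    ((hσ i).analyticAt (hΩ.mem_nhds hz)).contDiffAt
  have hAz : ∀ i j, ∀ m : ℕ, ContDiffAt ℂ m (fun w => A w i j) z := fun i j _ =>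
    ((hA i j).analyticAt (hΩ.mem_nhds hz)).contDiffAt
  ext p q
  simp only [jGram, Matrix.mul_apply, Matrix.of_apply, Matrix.conjTranspose_apply]
  rw [iteratedDeriv_frame_change hσz hAz p, iteratedDeriv_frame_change hσz hAz q, inner_sum]
  refine Finset.sum_congr rfl fun b _ => ?_
  rw [inner_smul_right, sum_inner, mul_comm]
  simp only [inner_smul_left, starRingEnd_apply]
end
end

section
/- Let σ : Ω → H be holomorphic and k ≥ 0, and set D(z) := det G_k(z). Then D is smooth on Ω and, indexing the rows and columns of the (k+2)×(k+2) matrix G_{k+1}(z) by 0,…,k+1, the following hold for every z ∈ Ω: (i) ∂D/∂z(z) equals the determinant of the matrix obtained from G_{k+1}(z) by deleting the row of index k+1 and the column of index k; (ii) ∂D/∂z̄(z) equals the determinant of the matrix obtained from G_{k+1}(z) by deleting the row of index k and the column of index k+1; (iii) ∂²D/∂z∂z̄(z) equals the determinant of the matrix obtained from G_{k+1}(z) by deleting the row of index k and the column of index k. -/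
open Matrix

noncomputable section

/-- Wirtinger derivative `∂g/∂z := (1/2)(∂g/∂x − i·∂g/∂y)`. -/
def Dz {E : Type*} [NormedAddCommGroup E] [NormedSpace ℂ E] (g : ℂ → E) (z : ℂ) : E :=
  (1 / 2 : ℂ) • (fderiv ℝ g z 1 - Complex.I • fderiv ℝ g z Complex.I)

/-- Wirtinger derivative `∂g/∂z̄ := (1/2)(∂g/∂x + i·∂g/∂y)`. -/
def Dzbar {E : Type*} [NormedAddCommGroup E] [NormedSpace ℂ E] (g : ℂ → E) (z : ℂ) : E :=
  (1 / 2 : ℂ) • (fderiv ℝ g z 1 + Complex.I • fderiv ℝ g z Complex.I)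

/-- Entrywise Wirtinger derivative `∂/∂z` of a matrix-valued function. -/
def mDz {ι : Type*} (M : ℂ → Matrix ι ι ℂ) (z : ℂ) : Matrix ι ι ℂ :=
  Matrix.of fun i j => Dz (fun w => M w i j) z

/-- Entrywise Wirtinger derivative `∂/∂z̄` of a matrix-valued function. -/
def mDzbar {ι : Type*} (M : ℂ → Matrix ι ι ℂ) (z : ℂ) : Matrix ι ι ℂ :=
  Matrix.of fun i j => Dzbar (fun w => M w i j) z

variable {H : Type*} [NormedAddCommGroup H] [InnerProductSpace ℂ H] [CompleteSpace H]

/-- `⟪x, y⟫` is the Mathlib inner product (conjugate-linear in the first argument);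
it equals the paper's inner product `⟨y, x⟩`, which is linear in the first argument. -/
local notation "⟪" x ", " y "⟫" => (inner ℂ x y : ℂ)

/-- `lG σ N z` is the `N×N` Gram matrix of `σ(z), σ′(z), …, σ^{(N−1)}(z)`; its `(i,j)` entry is
`⟪σ^{(i)}(z), σ^{(j)}(z)⟫ = ⟨σ^{(j)}(z), σ^{(i)}(z)⟩_paper`.  The jet Gram matrix `G_k` of the
paper is `lG σ (k+1)`. -/
def lG (σ : ℂ → H) (N : ℕ) (z : ℂ) : Matrix (Fin N) (Fin N) ℂ :=
  Matrix.of fun i j => ⟪iteratedDeriv (i : ℕ) σ z, iteratedDeriv (j : ℕ) σ z⟫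

section WirtingerDet

variable {n : Type*} [Fintype n] [DecidableEq n] {M : ℂ → Matrix n n ℂ} {z : ℂ}

/-- Row-wise Leibniz rule for the real derivative of a determinant. -/
theorem fderiv_det_apply (hM : ∀ i j, DifferentiableAt ℝ (fun w => M w i j) z) (v : ℂ) :
    fderiv ℝ (fun w => (M w).det) z v =
      ∑ i, ((M z).updateRow i fun j => fderiv ℝ (fun w => M w i j) z v).det := by
  let D : ContinuousMultilinearMap ℝ (fun _ : n => n → ℂ) ℂ :=
    { (detRowAlternating (n := n) (R := ℂ)).toMultilinearMap.restrictScalars ℝ with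
      cont := Continuous.matrix_det continuous_id }
  have hrow : ∀ i, HasFDerivAt (fun w => M w i)
      (ContinuousLinearMap.pi fun j => fderiv ℝ (fun w => M w i j) z) z := fun i =>
    hasFDerivAt_pi.2 fun j => (hM i j).hasFDerivAt
  have h := HasFDerivAt.multilinear_comp D hrow
  change fderiv ℝ (fun w => D fun i => M w i) z v = _
  rw [h.fderiv]
  simp only [_root_.sum_apply, ContinuousLinearMap.comp_apply]
  rfl

theorem Dz_det (hM : ∀ i j, DifferentiableAt ℝ (fun w => M w i j) z) :
    Dz (fun w => (M w).det) z = ∑ i, ((M z).updateRow i (mDz M z i)).det := by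
  have hrow : ∀ i, mDz M z i = (1 / 2 : ℂ) • ((fun j => fderiv ℝ (fun w => M w i j) z 1) +
      (-Complex.I) • fun j => fderiv ℝ (fun w => M w i j) z Complex.I) := by
    intro i
    ext j
    simp [mDz, Dz, sub_eq_add_neg]
  simp only [hrow, det_updateRow_smul, det_updateRow_add, Dz, fderiv_det_apply hM,
    ← Finset.mul_sum, Finset.sum_add_distrib, smul_eq_mul]
  ring

theorem Dzbar_det (hM : ∀ i j, DifferentiableAt ℝ (fun w => M w i j) z) :
    Dzbar (fun w => (M w).det) z = ∑ i, ((M z).updateRow i (mDzbar M z i)).det := by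
  have hrow : ∀ i, mDzbar M z i = (1 / 2 : ℂ) • ((fun j => fderiv ℝ (fun w => M w i j) z 1) +
      Complex.I • fun j => fderiv ℝ (fun w => M w i j) z Complex.I) := by
    intro i
    ext j
    simp [mDzbar, Dzbar]
  simp only [hrow, det_updateRow_smul, det_updateRow_add, Dzbar, fderiv_det_apply hM,
    ← Finset.mul_sum, Finset.sum_add_distrib, smul_eq_mul]

end WirtingerDet

section WirtingerInner

variable {E : Type*} [NormedAddCommGroup E] [InnerProductSpace ℂ E] {f g : ℂ → E} {z : ℂ}

theorem fderiv_inner_holomorphic (hf : DifferentiableAt ℂ f z) (hg : DifferentiableAt ℂ g z)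
    (v : ℂ) :
    fderiv ℝ (fun w => ⟪f w, g w⟫) z v =
      v * ⟪f z, deriv g z⟫ + starRingEnd ℂ v * ⟪deriv f z, g z⟫ := by
  have hv : ∀ {h : ℂ → E}, DifferentiableAt ℂ h z → fderiv ℝ h z v = v • deriv h z := by
    intro h hh
    rw [hh.fderiv_restrictScalars ℝ]
    simp
  rw [fderiv_inner_apply ℂ (hf.restrictScalars ℝ) (hg.restrictScalars ℝ), hv hf, hv hg,
    inner_smul_left, inner_smul_right]

theorem Dz_inner_holomorphic (hf : DifferentiableAt ℂ f z) (hg : DifferentiableAt ℂ g z) :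
    Dz (fun w => ⟪f w, g w⟫) z = ⟪f z, deriv g z⟫ := by
  simp only [Dz, fderiv_inner_holomorphic hf hg, Complex.conj_I, map_one, smul_eq_mul]
  linear_combination (-(1 / 2) * ⟪f z, deriv g z⟫ + 1 / 2 * ⟪deriv f z, g z⟫) * Complex.I_mul_I

theorem Dzbar_inner_holomorphic (hf : DifferentiableAt ℂ f z) (hg : DifferentiableAt ℂ g z) :
    Dzbar (fun w => ⟪f w, g w⟫) z = ⟪deriv f z, g z⟫ := by
  simp only [Dzbar, fderiv_inner_holomorphic hf hg, Complex.conj_I, map_one, smul_eq_mul]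
  linear_combination (1 / 2 * ⟪f z, deriv g z⟫ - 1 / 2 * ⟪deriv f z, g z⟫) * Complex.I_mul_I

end WirtingerInner

theorem DifferentiableOn.iteratedDeriv_complex {E : Type*} [NormedAddCommGroup E]
    [NormedSpace ℂ E] [CompleteSpace E] {f : ℂ → E} {Ω : Set ℂ} (hf : DifferentiableOn ℂ f Ω)
    (hΩ : IsOpen Ω) (m : ℕ) : DifferentiableOn ℂ (iteratedDeriv m f) Ω := by
  induction m with
  | zero => simpa using hf
  | succ m ih => rw [iteratedDeriv_succ]; exact ih.deriv hΩ

/-- The mixed Gram matrix of the derivatives of `σ` of orders `r i` (rows) and `c j` (columns). -/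
def jetGram {n : Type*} (σ : ℂ → H) (r c : n → ℕ) (z : ℂ) : Matrix n n ℂ :=
  Matrix.of fun i j => ⟪iteratedDeriv (r i) σ z, iteratedDeriv (c j) σ z⟫

section JetGram

variable {n : Type*} {σ : ℂ → H} {Ω : Set ℂ} {z : ℂ}

theorem differentiableAt_jetGram_apply (hσ : DifferentiableOn ℂ σ Ω) (hΩ : IsOpen Ω) (hz : z ∈ Ω)
    (r c : n → ℕ) (i j : n) : DifferentiableAt ℝ (fun w => jetGram σ r c w i j) z := by
  have hd (m : ℕ) : DifferentiableAt ℝ (iteratedDeriv m σ) z :=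
    ((hσ.iteratedDeriv_complex hΩ m).differentiableAt (hΩ.mem_nhds hz)).restrictScalars ℝ
  exact (hd (r i)).inner ℂ (hd (c j))

variable [Fintype n] [DecidableEq n]

theorem contDiffOn_det_jetGram (hσ : DifferentiableOn ℂ σ Ω) (hΩ : IsOpen Ω) (r c : n → ℕ) :
    ContDiffOn ℝ (⊤ : ℕ∞) (fun w => (jetGram σ r c w).det) Ω := by
  have hd (m : ℕ) : ContDiffOn ℝ (⊤ : ℕ∞) (iteratedDeriv m σ) Ω :=
    ((hσ.iteratedDeriv_complex hΩ m).contDiffOn hΩ).restrict_scalars ℝ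
  simp only [det_apply]
  exact ContDiffOn.sum fun p _ => (contDiffOn_prod fun i _ =>
    (hd (r (p i))).inner ℂ (hd (c i))).const_smul _

theorem Dzbar_det_jetGram (hσ : DifferentiableOn ℂ σ Ω) (hΩ : IsOpen Ω) (hz : z ∈ Ω)
    (r c : n → ℕ) :
    Dzbar (fun w => (jetGram σ r c w).det) z =
      ∑ i, (jetGram σ (Function.update r i (r i + 1)) c z).det := by
  have hd (m : ℕ) : DifferentiableAt ℂ (iteratedDeriv m σ) z :=
    (hσ.iteratedDeriv_complex hΩ m).differentiableAt (hΩ.mem_nhds hz)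
  rw [Dzbar_det (differentiableAt_jetGram_apply hσ hΩ hz r c)]
  refine Finset.sum_congr rfl fun i _ => congrArg det ?_
  ext a b
  rcases eq_or_ne a i with rfl | ha
  · simp only [updateRow_self, mDzbar, jetGram, of_apply, Function.update_self,
      iteratedDeriv_succ]
    exact Dzbar_inner_holomorphic (hd _) (hd _)
  · simp [jetGram, ha]

theorem Dz_det_jetGram (hσ : DifferentiableOn ℂ σ Ω) (hΩ : IsOpen Ω) (hz : z ∈ Ω)
    (r c : n → ℕ) :
    Dz (fun w => (jetGram σ r c w).det) z =
      ∑ j, (jetGram σ r (Function.update c j (c j + 1)) z).det := by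
  have hd (m : ℕ) : DifferentiableAt ℂ (iteratedDeriv m σ) z :=
    (hσ.iteratedDeriv_complex hΩ m).differentiableAt (hΩ.mem_nhds hz)
  simp only [← det_transpose (jetGram _ _ _ _)]
  rw [Dz_det (M := fun w => (jetGram σ r c w)ᵀ)
    fun i j => differentiableAt_jetGram_apply hσ hΩ hz r c j i]
  refine Finset.sum_congr rfl fun i _ => congrArg det ?_
  ext a b
  rcases eq_or_ne a i with rfl | ha
  · simp only [updateRow_self, mDz, jetGram, of_apply, transpose_apply, Function.update_self,
      iteratedDeriv_succ]
    exact Dz_inner_holomorphic (hd _) (hd _)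
  · simp [jetGram, ha]

end JetGram

theorem Fin.succAbove_castSucc_last_val (k : ℕ) (i : Fin (k + 1)) :
    (((Fin.last k).castSucc.succAbove i : Fin (k + 2)) : ℕ) =
      Function.update (fun j : Fin (k + 1) => (j : ℕ)) (Fin.last k) (k + 1) i := by
  rcases eq_or_ne i (Fin.last k) with rfl | hi
  · simp
  · rw [Function.update_of_ne hi, Fin.succAbove_of_castSucc_lt]
    · simp
    · exact Fin.castSucc_lt_castSucc_iff.2 (Fin.lt_last_iff_ne_last.2 hi)

/-- For consecutive orders only raising the last one avoids a repetition. -/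
theorem exists_ne_update_val_eq {k : ℕ} {i : Fin (k + 1)} (hi : i ≠ Fin.last k) :
    ∃ a b, a ≠ b ∧ Function.update (fun j : Fin (k + 1) => (j : ℕ)) i (i + 1) a =
      Function.update (fun j : Fin (k + 1) => (j : ℕ)) i (i + 1) b := by
  have hlt : (i : ℕ) + 1 < k + 1 := by
    have := Fin.val_lt_last hi
    omega
  have hne : (⟨i + 1, hlt⟩ : Fin (k + 1)) ≠ i := fun h => by simpa using congrArg Fin.val h
  exact ⟨i, ⟨i + 1, hlt⟩, hne.symm, by simp [Function.update_of_ne hne]⟩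

section ConsecutiveJets

variable {σ : ℂ → H} {Ω : Set ℂ} {z : ℂ} {k : ℕ}

theorem Dzbar_det_jetGram_val (hσ : DifferentiableOn ℂ σ Ω) (hΩ : IsOpen Ω) (hz : z ∈ Ω)
    (c : Fin (k + 1) → ℕ) :
    Dzbar (fun w => (jetGram σ (fun i : Fin (k + 1) => (i : ℕ)) c w).det) z =
      (jetGram σ (fun i => ((Fin.last k).castSucc.succAbove i : ℕ)) c z).det := by
  rw [Dzbar_det_jetGram hσ hΩ hz, Finset.sum_eq_single (Fin.last k)]
  · simp only [Fin.succAbove_castSucc_last_val, Fin.val_last]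
  · intro i _ hi
    obtain ⟨a, b, hab, h⟩ := exists_ne_update_val_eq hi
    exact det_zero_of_row_eq hab (by ext j; simp only [jetGram, of_apply, h])
  · simp

theorem Dz_det_jetGram_val (hσ : DifferentiableOn ℂ σ Ω) (hΩ : IsOpen Ω) (hz : z ∈ Ω)
    (r : Fin (k + 1) → ℕ) :
    Dz (fun w => (jetGram σ r (fun j : Fin (k + 1) => (j : ℕ)) w).det) z =
      (jetGram σ r (fun j => ((Fin.last k).castSucc.succAbove j : ℕ)) z).det := by
  rw [Dz_det_jetGram hσ hΩ hz, Finset.sum_eq_single (Fin.last k)]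
  · simp only [Fin.succAbove_castSucc_last_val, Fin.val_last]
  · intro i _ hi
    obtain ⟨a, b, hab, h⟩ := exists_ne_update_val_eq hi
    exact det_zero_of_column_eq hab fun j => by simp only [jetGram, of_apply, h]
  · simp

end ConsecutiveJets

/-- For `σ : Ω → H` holomorphic and `D(z) := det G_k(z)` (where `G_k = lG σ (k+1)`), `D` is
smooth on `Ω` and, indexing rows and columns of the `(k+2)×(k+2)` matrix `G_{k+1}(z)` by
`0,…,k+1`:
(i) `∂D/∂z` is the determinant of `G_{k+1}(z)` with the row of index `k+1` and the column of
index `k` deleted;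
(ii) `∂D/∂z̄` is the determinant of `G_{k+1}(z)` with the row of index `k` and the column of
index `k+1` deleted;
(iii) `∂²D/∂z∂z̄` is the determinant of `G_{k+1}(z)` with the row of index `k` and the column
of index `k` deleted. -/
theorem stmt4 (Ω : Set ℂ) (hΩ : IsOpen Ω) (σ : ℂ → H)
    (hσ : DifferentiableOn ℂ σ Ω) (k : ℕ) :
    ContDiffOn ℝ (⊤ : ℕ∞) (fun z => (lG σ (k + 1) z).det) Ω ∧
    ∀ z ∈ Ω,
      Dz (fun w => (lG σ (k + 1) w).det) z =
        ((lG σ (k + 2) z).submatrix (Fin.last (k + 1)).succAbove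
          ((Fin.last k).castSucc : Fin (k + 2)).succAbove).det ∧
      Dzbar (fun w => (lG σ (k + 1) w).det) z =
        ((lG σ (k + 2) z).submatrix ((Fin.last k).castSucc : Fin (k + 2)).succAbove
          (Fin.last (k + 1)).succAbove).det ∧
      Dzbar (fun w => Dz (fun u => (lG σ (k + 1) u).det) w) z =
        ((lG σ (k + 2) z).submatrix ((Fin.last k).castSucc : Fin (k + 2)).succAbove
          ((Fin.last k).castSucc : Fin (k + 2)).succAbove).det := by
  have hG : ∀ w, lG σ (k + 1) w =
      jetGram σ (fun i : Fin (k + 1) => (i : ℕ)) (fun j : Fin (k + 1) => (j : ℕ)) w :=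
    fun _ => rfl
  have hsub : ∀ (w : ℂ) (p q : Fin (k + 1) → Fin (k + 2)), (lG σ (k + 2) w).submatrix p q =
      jetGram σ (fun i => (p i : ℕ)) (fun j => (q j : ℕ)) w := fun _ _ _ => rfl
  simp only [hG, hsub, Fin.succAbove_last, Fin.val_castSucc]
  refine ⟨contDiffOn_det_jetGram hσ hΩ _ _, fun z hz => ⟨Dz_det_jetGram_val hσ hΩ hz _,
    Dzbar_det_jetGram_val hσ hΩ hz _, ?_⟩⟩
  rw [← Dzbar_det_jetGram_val hσ hΩ hz]
  have heq : (fun w => Dz (fun u => (jetGram σ (fun i : Fin (k + 1) => (i : ℕ))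
      (fun j : Fin (k + 1) => (j : ℕ)) u).det) w) =ᶠ[nhds z] fun w =>
      (jetGram σ (fun i : Fin (k + 1) => (i : ℕ)) (fun j => ((Fin.last k).castSucc.succAbove j : ℕ))
        w).det := by
    filter_upwards [hΩ.mem_nhds hz] with w hw using Dz_det_jetGram_val hσ hΩ hw _
  simp only [Dzbar, heq.fderiv_eq]
end
end

section
/- Let σ : Ω → H be holomorphic and k ≥ 1, and set D_m(z) := det G_m(z) for m ≥ 0. Then for every z ∈ Ω, D_k(z)·(∂²D_k/∂z∂z̄)(z) − (∂D_k/∂z̄)(z)·(∂D_k/∂z)(z) = D_{k−1}(z)·D_{k+1}(z). Consequently, if σ is k-nondegenerate (so D_k(z) > 0 on Ω), the curvature of the determinant of the k-jet bundle satisfies ∂²(log D_k)/∂z∂z̄ (z) = D_{k−1}(z)·D_{k+1}(z)/D_k(z)² for every z ∈ Ω. -/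
open Matrix

noncomputable section

variable {H : Type*} [NormedAddCommGroup H] [InnerProductSpace ℂ H] [CompleteSpace H]

/-- `⟪x, y⟫` is the Mathlib inner product (conjugate-linear in the first argument);
it equals the paper's inner product `⟨y, x⟩`, which is linear in the first argument. -/
local notation "⟪" x ", " y "⟫" => (inner ℂ x y : ℂ)

set_option linter.unusedSectionVars false

/-- `g` is real-differentiable at `z` with Wirtinger derivatives `∂g/∂z = a` and `∂g/∂z̄ = b`. -/
def HasWirtingerAt (g : ℂ → ℂ) (a b z : ℂ) : Prop :=
  HasFDerivAt g (a • (1 : ℂ →L[ℝ] ℂ) + b • (Complex.conjCLE : ℂ →L[ℝ] ℂ)) z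

namespace HasWirtingerAt

variable {f g : ℂ → ℂ} {a b c d z : ℂ}

theorem Dz_eq (h : HasWirtingerAt g a b z) : Dz g z = a := by
  rw [Dz, HasFDerivAt.fderiv h]
  simp
  linear_combination (-(a - b) / 2) * Complex.I_mul_I

theorem Dzbar_eq (h : HasWirtingerAt g a b z) : Dzbar g z = b := by
  rw [Dzbar, HasFDerivAt.fderiv h]
  simp
  linear_combination ((a - b) / 2) * Complex.I_mul_I

theorem mul (hf : HasWirtingerAt f a b z) (hg : HasWirtingerAt g c d z) :
    HasWirtingerAt (fun w => f w * g w) (a * g z + f z * c) (b * g z + f z * d) z := by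
  refine (HasFDerivAt.fun_mul hf hg).congr_fderiv ?_
  ext v
  simp
  ring

theorem comp_hasDerivAt {φ : ℂ → ℂ} {φ' : ℂ} (hφ : HasDerivAt φ φ' (f z))
    (hf : HasWirtingerAt f a b z) :
    HasWirtingerAt (fun w => φ (f w)) (φ' * a) (φ' * b) z := by
  refine ((hφ.hasFDerivAt.restrictScalars ℝ).comp z hf).congr_fderiv ?_
  ext v
  simp
  ring

theorem det {n : Type*} [Fintype n] [DecidableEq n] {M : ℂ → Matrix n n ℂ}
    {A B : Matrix n n ℂ} (hM : ∀ i j, HasWirtingerAt (fun w => M w i j) (A i j) (B i j) z) :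
    HasWirtingerAt (fun w => (M w).det)
      (∑ j, ((M z).updateCol j fun i => A i j).det)
      (∑ j, ((M z).updateCol j fun i => B i j).det) z := by
  have key : ∀ (C : Matrix n n ℂ), ∑ j, ((M z).updateCol j fun i => C i j).det =
      ∑ p : Equiv.Perm n, (Equiv.Perm.sign p : ℂ) *
        ∑ j, (∏ i ∈ Finset.univ.erase j, M z (p i) i) * C (p j) j := by
    intro C
    simp_rw [Matrix.det_apply', Finset.mul_sum]
    rw [Finset.sum_comm]
    refine Finset.sum_congr rfl fun p _ => Finset.sum_congr rfl fun j _ => ?_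
    rw [← Finset.prod_erase_mul _ _ (Finset.mem_univ j)]
    congr 2
    · refine Finset.prod_congr rfl fun i hi => ?_
      simp [Finset.ne_of_mem_erase hi]
    · simp
  rw [key, key]
  simp_rw [Matrix.det_apply']
  have h := HasFDerivAt.fun_sum (u := Finset.univ) fun (p : Equiv.Perm n) _ =>
    (HasFDerivAt.finsetProd (u := Finset.univ) fun i _ => hM (p i) i).const_mul
      (Equiv.Perm.sign p : ℂ)
  refine h.congr_fderiv ?_
  ext v
  simp only [_root_.sum_apply, _root_.smul_apply, _root_.add_apply, smul_eq_mul, Finset.sum_mul,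
    Finset.mul_sum, ← Finset.sum_add_distrib]
  refine Finset.sum_congr rfl fun p _ => Finset.sum_congr rfl fun j _ => ?_
  ring

theorem inner {f g : ℂ → H} {f' g' : H} (hf : HasDerivAt f f' z) (hg : HasDerivAt g g' z) :
    HasWirtingerAt (fun w => ⟪f w, g w⟫) ⟪f z, g'⟫ ⟪f', g z⟫ z := by
  have h := (hf.hasFDerivAt.restrictScalars ℝ).inner ℂ (hg.hasFDerivAt.restrictScalars ℝ)
  refine h.congr_fderiv ?_
  ext
  simp [inner_smul_left, inner_smul_right]
  ring

end HasWirtingerAt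

theorem hasDerivAt_iteratedDeriv {Ω : Set ℂ} (hΩ : IsOpen Ω) {σ : ℂ → H}
    (hσ : DifferentiableOn ℂ σ Ω) (n : ℕ) {z : ℂ} (hz : z ∈ Ω) :
    HasDerivAt (iteratedDeriv n σ) (iteratedDeriv (n + 1) σ z) z := by
  have h : ∀ m, DifferentiableOn ℂ (iteratedDeriv m σ) Ω := by
    intro m
    induction m with
    | zero => simpa using hσ
    | succ m ih => rw [iteratedDeriv_succ]; exact ih.deriv hΩ
  rw [iteratedDeriv_succ]
  exact ((h n).differentiableAt (hΩ.mem_nhds hz)).hasDerivAt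

/-- The indices `0, …, k - 1, k + a`. -/
def jetIndex (k a : ℕ) : Fin k ⊕ Unit → ℕ := Sum.elim (fun i => i) fun _ => k + a

/-- The matrix of inner products of the derivatives of `σ` of orders `0, …, k - 1, k + a` with
those of orders `0, …, k - 1, k + b`. -/
def jetMatrix (σ : ℂ → H) (k a b : ℕ) (z : ℂ) : Matrix (Fin k ⊕ Unit) (Fin k ⊕ Unit) ℂ :=
  Matrix.of fun i j => ⟪iteratedDeriv (jetIndex k a i) σ z, iteratedDeriv (jetIndex k b j) σ z⟫

theorem exists_jetIndex_eq_succ {k : ℕ} (i : Fin k) :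
    ∃ j, Sum.inl i ≠ j ∧ jetIndex k 0 j = jetIndex k 0 (Sum.inl i) + 1 := by
  by_cases h : (i : ℕ) + 1 < k
  · exact ⟨Sum.inl ⟨i + 1, h⟩, by simp [Fin.ext_iff], rfl⟩
  · exact ⟨Sum.inr (), by simp, by simp [jetIndex]; omega⟩

theorem sum_det_updateCol_jetIndex {k : ℕ} (F : Fin k ⊕ Unit → ℕ → ℂ) :
    ∑ j, ((Matrix.of fun i j => F i (jetIndex k 0 j)).updateCol j
        fun i => F i (jetIndex k 0 j + 1)).det =
      (Matrix.of fun i j => F i (jetIndex k 1 j)).det := by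
  rw [Fintype.sum_sum_type, Finset.sum_eq_zero, zero_add, Fintype.sum_unique]
  · congr 1
    ext i (j | j) <;> simp [jetIndex]
  · intro i _
    obtain ⟨j, hij, hj⟩ := exists_jetIndex_eq_succ i
    refine Matrix.det_zero_of_column_eq hij fun l => ?_
    simp [hij.symm, hj]

theorem det_jetMatrix_zero_zero (σ : ℂ → H) (k : ℕ) (z : ℂ) :
    (jetMatrix σ k 0 0 z).det = (lG σ (k + 1) z).det := by
  rw [← Matrix.det_submatrix_equiv_self
    (((Equiv.refl (Fin k)).sumCongr (Equiv.ofUnique Unit (Fin 1))).trans finSumFinEquiv)]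
  congr 1
  ext (i | i) (j | j) <;> simp [jetMatrix, jetIndex, lG]

theorem hasWirtingerAt_jetMatrix {Ω : Set ℂ} (hΩ : IsOpen Ω) {σ : ℂ → H}
    (hσ : DifferentiableOn ℂ σ Ω) (k a b : ℕ) {z : ℂ} (hz : z ∈ Ω) (i j : Fin k ⊕ Unit) :
    HasWirtingerAt (fun w => jetMatrix σ k a b w i j)
      ⟪iteratedDeriv (jetIndex k a i) σ z, iteratedDeriv (jetIndex k b j + 1) σ z⟫
      ⟪iteratedDeriv (jetIndex k a i + 1) σ z, iteratedDeriv (jetIndex k b j) σ z⟫ z :=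
  .inner (hasDerivAt_iteratedDeriv hΩ hσ _ hz) (hasDerivAt_iteratedDeriv hΩ hσ _ hz)

theorem exists_hasWirtingerAt_det_jetMatrix_left {Ω : Set ℂ} (hΩ : IsOpen Ω) {σ : ℂ → H}
    (hσ : DifferentiableOn ℂ σ Ω) (k a : ℕ) {z : ℂ} (hz : z ∈ Ω) :
    ∃ d, HasWirtingerAt (fun w => (jetMatrix σ k a 0 w).det) (jetMatrix σ k a 1 z).det d z := by
  rw [show (jetMatrix σ k a 1 z).det = _ from (sum_det_updateCol_jetIndex fun i m =>
    ⟪iteratedDeriv (jetIndex k a i) σ z, iteratedDeriv m σ z⟫).symm]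
  exact ⟨_, .det (M := jetMatrix σ k a 0) fun i j => hasWirtingerAt_jetMatrix hΩ hσ k a 0 hz i j⟩

theorem exists_hasWirtingerAt_det_jetMatrix_right {Ω : Set ℂ} (hΩ : IsOpen Ω) {σ : ℂ → H}
    (hσ : DifferentiableOn ℂ σ Ω) (k b : ℕ) {z : ℂ} (hz : z ∈ Ω) :
    ∃ d, HasWirtingerAt (fun w => (jetMatrix σ k 0 b w).det) d (jetMatrix σ k 1 b z).det z := by
  simp_rw [← Matrix.det_transpose (jetMatrix σ k _ b _)]
  rw [show (jetMatrix σ k 1 b z)ᵀ.det = _ from (sum_det_updateCol_jetIndex fun i m =>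
    ⟪iteratedDeriv m σ z, iteratedDeriv (jetIndex k b i) σ z⟫).symm]
  exact ⟨_, .det (M := fun w => (jetMatrix σ k 0 b w)ᵀ)
    fun i j => hasWirtingerAt_jetMatrix hΩ hσ k 0 b hz j i⟩

/-- The Desnanot–Jacobi identity, for a matrix bordering an invertible block. -/
theorem det_mul_det_fromBlocks_two {n K : Type*} [Fintype n] [DecidableEq n] [Field K]
    (A : Matrix n n K) (hA : A.det ≠ 0) (B : Matrix n (Fin 2) K) (C : Matrix (Fin 2) n K)
    (D : Matrix (Fin 2) (Fin 2) K) :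
    let m (a b : Fin 2) : K := (fromBlocks A (B.submatrix id fun _ : Unit => b)
      (C.submatrix (fun _ : Unit => a) id) (D.submatrix (fun _ => a) fun _ => b)).det
    A.det * (fromBlocks A B C D).det = m 0 0 * m 1 1 - m 1 0 * m 0 1 := by
  intro m
  let := A.invertibleOfIsUnitDet hA.isUnit
  have hm : ∀ a b, m a b = A.det * (D - C * ⅟A * B) a b := by
    intro a b
    simp only [m, Matrix.det_fromBlocks₁₁, Matrix.det_unique (n := Unit)]
    rfl
  rw [Matrix.det_fromBlocks₁₁, Matrix.det_fin_two, hm, hm, hm, hm]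
  ring

theorem det_jetMatrix_eq_zero (σ : ℂ → H) (k a b : ℕ) (z : ℂ) (h : (lG σ k z).det = 0) :
    (jetMatrix σ k a b z).det = 0 := by
  rw [← Matrix.det_transpose]
  refine Matrix.det_eq_zero_of_not_linearIndependent_rows fun hli => ?_
  have hL : LinearIndependent ℂ fun j => iteratedDeriv (jetIndex k b j) σ z :=
    LinearIndependent.of_comp
      (LinearMap.pi fun i => (innerSL ℂ (iteratedDeriv (jetIndex k a i) σ z)).toLinearMap) hli
  have := hL.comp Sum.inl Sum.inl_injective
  exact det_gram_ne_zero_iff_linearIndependent.mpr this h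

/-- The Desnanot–Jacobi identity for jet Gram matrices. -/
theorem det_lG_mul_det_lG (σ : ℂ → H) (k : ℕ) (z : ℂ) :
    (lG σ k z).det * (lG σ (k + 2) z).det =
      (jetMatrix σ k 0 0 z).det * (jetMatrix σ k 1 1 z).det -
        (jetMatrix σ k 1 0 z).det * (jetMatrix σ k 0 1 z).det := by
  by_cases h : (lG σ k z).det = 0
  · simp [h, det_jetMatrix_eq_zero]
  rw [← Matrix.det_submatrix_equiv_self finSumFinEquiv (lG σ (k + 2) z)]
  let B : Matrix (Fin k) (Fin 2) ℂ :=
    Matrix.of fun i j => ⟪iteratedDeriv i σ z, iteratedDeriv (k + j) σ z⟫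
  let C : Matrix (Fin 2) (Fin k) ℂ :=
    Matrix.of fun i j => ⟪iteratedDeriv (k + i) σ z, iteratedDeriv j σ z⟫
  let D : Matrix (Fin 2) (Fin 2) ℂ :=
    Matrix.of fun i j => ⟪iteratedDeriv (k + i) σ z, iteratedDeriv (k + j) σ z⟫
  have hG : (lG σ (k + 2) z).submatrix finSumFinEquiv finSumFinEquiv =
      fromBlocks (lG σ k z) B C D := by
    ext (i | i) (j | j) <;> simp [lG, B, C, D]
  have hM : ∀ a b : Fin 2, fromBlocks (lG σ k z) (B.submatrix id fun _ : Unit => b)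
      (C.submatrix (fun _ : Unit => a) id) (D.submatrix (fun _ => a) fun _ => b) =
        jetMatrix σ k a b z := by
    intro a b
    ext (i | i) (j | j) <;> simp [jetMatrix, jetIndex, lG, B, C, D]
  have key := det_mul_det_fromBlocks_two (lG σ k z) h B C D
  simp only [hM] at key
  rw [hG]
  exact key

theorem Dzbar_congr {f g : ℂ → ℂ} {z : ℂ} (h : f =ᶠ[nhds z] g) : Dzbar f z = Dzbar g z := by
  rw [Dzbar, Dzbar, h.fderiv_eq]

/-- With `D_m(z) := det G_m(z) = det (lG σ (m+1) z)` for a holomorphic `σ`: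
`D_k·(∂²D_k/∂z∂z̄) − (∂D_k/∂z̄)·(∂D_k/∂z) = D_{k−1}·D_{k+1}` on `Ω`; consequently, if `σ` is
`k`-nondegenerate, then `∂²(log D_k)/∂z∂z̄ = D_{k−1}·D_{k+1}/D_k²` on `Ω`. -/
theorem stmt5 (Ω : Set ℂ) (hΩ : IsOpen Ω) (σ : ℂ → H)
    (hσ : DifferentiableOn ℂ σ Ω) (k : ℕ) (hk : 1 ≤ k) :
    (∀ z ∈ Ω,
      (lG σ (k + 1) z).det * Dzbar (fun w => Dz (fun u => (lG σ (k + 1) u).det) w) z -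
          Dzbar (fun w => (lG σ (k + 1) w).det) z * Dz (fun w => (lG σ (k + 1) w).det) z =
        (lG σ k z).det * (lG σ (k + 2) z).det) ∧
    ((∀ z ∈ Ω, LinearIndependent ℂ fun i : Fin (k + 1) => iteratedDeriv (i : ℕ) σ z) →
      ∀ z ∈ Ω,
        Dzbar (fun w => Dz (fun u => Complex.log (lG σ (k + 1) u).det) w) z =
          (lG σ k z).det * (lG σ (k + 2) z).det / ((lG σ (k + 1) z).det) ^ 2) := by
  have hD : ∀ z ∈ Ω, HasWirtingerAt (fun w => (lG σ (k + 1) w).det)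
      (jetMatrix σ k 0 1 z).det (jetMatrix σ k 1 0 z).det z := by
    intro z hz
    simp_rw [← det_jetMatrix_zero_zero]
    obtain ⟨d, h₁⟩ := exists_hasWirtingerAt_det_jetMatrix_left hΩ hσ k 0 hz
    obtain ⟨e, h₂⟩ := exists_hasWirtingerAt_det_jetMatrix_right hΩ hσ k 0 hz
    rwa [← h₂.Dzbar_eq, h₁.Dzbar_eq]
  refine ⟨fun z hz => ?_, fun hli z hz => ?_⟩
  · have hDz : (fun w => Dz (fun u => (lG σ (k + 1) u).det) w) =ᶠ[nhds z]
        fun w => (jetMatrix σ k 0 1 w).det := by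
      filter_upwards [hΩ.mem_nhds hz] with w hw using (hD w hw).Dz_eq
    obtain ⟨e, he⟩ := exists_hasWirtingerAt_det_jetMatrix_right hΩ hσ k 1 hz
    rw [Dzbar_congr hDz, he.Dzbar_eq, (hD z hz).Dz_eq, (hD z hz).Dzbar_eq, det_lG_mul_det_lG,
      det_jetMatrix_zero_zero]
  · open scoped ComplexOrder in
    have hpos : ∀ w ∈ Ω, 0 < (lG σ (k + 1) w).det := fun w hw =>
      (posDef_gram_of_linearIndependent (hli w hw)).det_pos
    have hDz : (fun w => Dz (fun u => Complex.log (lG σ (k + 1) u).det) w) =ᶠ[nhds z]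
        fun w => (jetMatrix σ k 0 1 w).det * (lG σ (k + 1) w).det⁻¹ := by
      filter_upwards [hΩ.mem_nhds hz] with w hw
      rw [(HasWirtingerAt.comp_hasDerivAt (Complex.hasDerivAt_log
        (.inl (Complex.pos_iff.mp (hpos w hw)).1)) (hD w hw)).Dz_eq, mul_comm]
    obtain ⟨e, he⟩ := exists_hasWirtingerAt_det_jetMatrix_right hΩ hσ k 1 hz
    have h0 := (hpos z hz).ne'
    rw [Dzbar_congr hDz, (he.mul (.comp_hasDerivAt (hasDerivAt_inv h0) (hD z hz))).Dzbar_eq,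
      det_lG_mul_det_lG, det_jetMatrix_zero_zero]
    field_simp
    ring
end
end

section
/- Let H and H̃ be complex Hilbert spaces, Ω ⊆ ℂ open, k ≥ 1, and let σ : Ω → H and σ̃ : Ω → H̃ be holomorphic and (k+1)-nondegenerate, with jet Gram matrices G_m and G̃_m respectively. Then the following are equivalent: (1) for every z₀ ∈ Ω there exist an open neighborhood U ⊆ Ω of z₀ and holomorphic nowhere-vanishing functions ψ, ψ′ : U → ℂ with |ψ(z)|²·det G̃_k(z) = det G_k(z) and |ψ′(z)|²·det G̃_{k+1}(z) = det G_{k+1}(z) for all z ∈ U (local equivalence of det J_k and of det J_{k+1} of the two line bundles); (2) for every z₀ ∈ Ω there exist an open neighborhood U ⊆ Ω of z₀ and a holomorphic nowhere-vanishing function φ : U → ℂ with |φ(z)|²·⟨σ̃(z),σ̃(z)⟩ = ⟨σ(z),σ(z)⟩ for all z ∈ U (local equivalence of the line bundles). -/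
open Matrix

noncomputable section

variable {H : Type*} [NormedAddCommGroup H] [InnerProductSpace ℂ H] [CompleteSpace H]

/-- `⟪x, y⟫` is the Mathlib inner product (conjugate-linear in the first argument);
it equals the paper's inner product `⟨y, x⟩`, which is linear in the first argument. -/
local notation "⟪" x ", " y "⟫" => (inner ℂ x y : ℂ)

variable {H' : Type*} [NormedAddCommGroup H'] [InnerProductSpace ℂ H'] [CompleteSpace H']

open Filter Topology ComplexConjugate

/-- `f` is real differentiable at `z` with `∂f/∂z = p` and `∂f/∂z̄ = q`. -/
def HasWirtingerDerivAt (f : ℂ → ℂ) (p q z : ℂ) : Prop :=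
  HasFDerivAt f (p • ContinuousLinearMap.id ℝ ℂ + q • (Complex.conjCLE : ℂ →L[ℝ] ℂ)) z

namespace HasWirtingerDerivAt

variable {f g : ℂ → ℂ} {p q p' q' z : ℂ}

theorem unique (h : HasWirtingerDerivAt f p q z) (h' : HasWirtingerDerivAt f p' q' z) :
    p = p' ∧ q = q' := by
  have e := HasFDerivAt.unique h h'
  have e1 := congrArg (fun L : ℂ →L[ℝ] ℂ => L 1) e
  have e2 := congrArg (fun L : ℂ →L[ℝ] ℂ => L Complex.I) e
  simp at e1 e2
  have e3 : p - q = p' - q' := by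
    apply mul_right_cancel₀ Complex.I_ne_zero
    linear_combination e2
  constructor
  · linear_combination (e1 + e3) / 2
  · linear_combination (e1 - e3) / 2

theorem congr_of_eventuallyEq (h : HasWirtingerDerivAt f p q z) (e : g =ᶠ[𝓝 z] f) :
    HasWirtingerDerivAt g p q z :=
  HasFDerivAt.congr_of_eventuallyEq h e

theorem congr_derivs (h : HasWirtingerDerivAt f p q z) (hp : p = p') (hq : q = q') :
    HasWirtingerDerivAt f p' q' z := hp ▸ hq ▸ h

theorem add (hf : HasWirtingerDerivAt f p q z) (hg : HasWirtingerDerivAt g p' q' z) :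
    HasWirtingerDerivAt (fun z => f z + g z) (p + p') (q + q') z := by
  refine (HasFDerivAt.add hf hg).congr_fderiv ?_
  refine ContinuousLinearMap.ext fun v => ?_
  simp
  ring

theorem mul (hf : HasWirtingerDerivAt f p q z) (hg : HasWirtingerDerivAt g p' q' z) :
    HasWirtingerDerivAt (fun z => f z * g z) (p * g z + f z * p') (q * g z + f z * q') z := by
  refine (HasFDerivAt.mul hf hg).congr_fderiv ?_
  refine ContinuousLinearMap.ext fun v => ?_
  simp
  ring

protected theorem inner {E : Type*} [NormedAddCommGroup E] [InnerProductSpace ℂ E] {a b : ℂ → E}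
    {a' b' : E} (ha : HasDerivAt a a' z) (hb : HasDerivAt b b' z) :
    HasWirtingerDerivAt (fun z => ⟪a z, b z⟫) ⟪a z, b'⟫ ⟪a', b z⟫ z := by
  refine ((ha.hasFDerivAt.restrictScalars ℝ).inner ℂ
    (hb.hasFDerivAt.restrictScalars ℝ)).congr_fderiv ?_
  refine ContinuousLinearMap.ext fun v => ?_
  simp [fderivInnerCLM_apply, inner_smul_left, inner_smul_right]
  ring

theorem of_hasDerivAt (hf : HasDerivAt f p z) : HasWirtingerDerivAt f p 0 z := by
  refine (hf.hasFDerivAt.restrictScalars ℝ).congr_fderiv ?_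
  refine ContinuousLinearMap.ext fun v => ?_
  simp [mul_comm]

theorem conj_of_hasDerivAt (hf : HasDerivAt f p z) :
    HasWirtingerDerivAt (fun z => conj (f z)) 0 (conj p) z := by
  simpa using HasWirtingerDerivAt.inner hf (hasDerivAt_const z (1 : ℂ))

theorem det_updateCol {ι : Type*} [Fintype ι] [DecidableEq ι] {M : ℂ → Matrix ι ι ℂ}
    {P Q : Matrix ι ι ℂ} (h : ∀ i j, HasWirtingerDerivAt (fun z => M z i j) (P i j) (Q i j) z) :
    HasWirtingerDerivAt (fun z => (M z).det)
      (∑ j, ((M z).updateCol j fun i => P i j).det)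
      (∑ j, ((M z).updateCol j fun i => Q i j).det) z := by
  have expand (R : Matrix ι ι ℂ) : ∑ j, ((M z).updateCol j fun i => R i j).det =
      ∑ τ : Equiv.Perm ι, (Equiv.Perm.sign τ : ℂ) *
        ∑ j, (∏ l ∈ Finset.univ.erase j, M z (τ l) l) * R (τ j) j := by
    simp_rw [det_apply', Finset.mul_sum]
    rw [Finset.sum_comm]
    refine Finset.sum_congr rfl fun τ _ => Finset.sum_congr rfl fun j _ => ?_
    rw [← Finset.prod_erase_mul _ _ (Finset.mem_univ j)]
    congr 2
    · exact Finset.prod_congr rfl fun l hl => by simp [Finset.ne_of_mem_erase hl]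
    · simp
  simp_rw [expand, det_apply']
  have key := HasFDerivAt.fun_sum (u := Finset.univ) fun (τ : Equiv.Perm ι) _ =>
    (HasFDerivAt.finsetProd (u := Finset.univ) fun l _ => h (τ l) l).const_mul
      (Equiv.Perm.sign τ : ℂ)
  refine key.congr_fderiv ?_
  refine ContinuousLinearMap.ext fun v => ?_
  simp [Finset.sum_mul, Finset.mul_sum, ← Finset.sum_add_distrib, mul_add]
  refine Finset.sum_congr rfl fun τ _ => Finset.sum_congr rfl fun j _ => ?_
  ring

protected theorem det {ι : Type*} [Fintype ι] [DecidableEq ι] {M : ℂ → Matrix ι ι ℂ}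
    {P Q : Matrix ι ι ℂ} (h : ∀ i j, HasWirtingerDerivAt (fun z => M z i j) (P i j) (Q i j) z) :
    HasWirtingerDerivAt (fun z => (M z).det)
      (∑ j, ((M z).updateCol j fun i => P i j).det)
      (∑ i, ((M z).updateRow i (Q i)).det) z := by
  have h₁ := det_updateCol h
  have h₂ := det_updateCol (M := fun z => (M z)ᵀ) (P := Pᵀ) (Q := Qᵀ) fun i j => h j i
  simp only [det_transpose] at h₂
  refine h₁.congr_derivs rfl ((h₁.unique h₂).2.trans ?_)
  refine Finset.sum_congr rfl fun i _ => ?_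
  rw [← det_transpose (updateRow _ _ _), ← updateCol_transpose]
  rfl

end HasWirtingerDerivAt

/-- The determinant of `g` on rows `0, …, n-1, i` and columns `0, …, n-1, j`. -/
def borderedMinor (g : ℕ → ℕ → ℂ) (n i j : ℕ) : ℂ :=
  det (of fun a b : Fin (n + 1) =>
    g (Function.update Fin.val (Fin.last n) i a) (Function.update Fin.val (Fin.last n) j b))

theorem update_val_last (n : ℕ) :
    Function.update Fin.val (Fin.last n) n = (Fin.val : Fin (n + 1) → ℕ) :=
  Function.update_eq_self (Fin.last n) Fin.val

theorem borderedMinor_self (g : ℕ → ℕ → ℂ) (n : ℕ) :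
    borderedMinor g n n n = det (of fun a b : Fin (n + 1) => g a b) := by
  simp only [borderedMinor, update_val_last]

theorem borderedMinor_mul_sub (g : ℕ → ℕ → ℂ) (n : ℕ)
    (h : det (of fun a b : Fin n => g a b) ≠ 0) :
    borderedMinor g n n n * borderedMinor g n (n + 1) (n + 1) -
      borderedMinor g n n (n + 1) * borderedMinor g n (n + 1) n =
    det (of fun a b : Fin (n + 2) => g a b) * det (of fun a b : Fin n => g a b) := by
  set A : Matrix (Fin n) (Fin n) ℂ := of fun a b : Fin n => g a b with hA
  let s (i j : ℕ) : ℂ := g i j - ∑ b : Fin n, (∑ a : Fin n, g i a * A⁻¹ a b) * g b j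
  have schur (m : ℕ) (r c : Fin (n + m) → ℕ) (hr : ∀ a : Fin n, r (Fin.castAdd m a) = a)
      (hc : ∀ a : Fin n, c (Fin.castAdd m a) = a) :
      det (of fun a b => g (r a) (c b)) =
        A.det * det (of fun a b : Fin m => s (r (Fin.natAdd n a)) (c (Fin.natAdd n b))) := by
    let := A.invertibleOfIsUnitDet h.isUnit
    rw [← det_submatrix_equiv_self finSumFinEquiv, ← fromBlocks_toBlocks (submatrix _ _ _)]
    have e : (submatrix (of fun a b => g (r a) (c b)) finSumFinEquiv finSumFinEquiv).toBlocks₁₁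
        = A := by
      ext a b
      simp [toBlocks₁₁, hr, hc, hA]
    rw [e, det_fromBlocks₁₁]
    congr 2
    ext a b
    simp [toBlocks₁₂, toBlocks₂₁, toBlocks₂₂, hr, hc, s, Matrix.mul_apply]
  have bordered (i j : ℕ) : borderedMinor g n i j = A.det * s i j := by
    have last : Fin.natAdd n (0 : Fin 1) = Fin.last n := by ext; simp
    have hu (i : ℕ) (a : Fin n) :
        Function.update (Fin.val : Fin (n + 1) → ℕ) (Fin.last n) i (Fin.castAdd 1 a) = a := by
      rw [Function.update_of_ne]
      · simp
      · exact (Fin.castSucc_lt_last a).ne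
    rw [borderedMinor, schur 1 _ _ (hu i) (hu j)]
    simp [last]
  have full := schur 2 Fin.val Fin.val (fun _ => rfl) (fun _ => rfl)
  rw [full, det_fin_two]
  simp only [bordered, of_apply, Fin.val_natAdd, Fin.val_zero, Fin.val_one, add_zero]
  ring

/-- The matrix of inner products of the derivatives of `σ` at `z`. -/
def jetInner (σ : ℂ → H) (z : ℂ) (i j : ℕ) : ℂ := ⟪iteratedDeriv i σ z, iteratedDeriv j σ z⟫

theorem det_lG_ne_zero {E : Type*} [NormedAddCommGroup E] [InnerProductSpace ℂ E] {σ : ℂ → E} {z : ℂ}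
    {m n : ℕ} (hmn : n ≤ m) (h : LinearIndependent ℂ fun i : Fin m => iteratedDeriv (i : ℕ) σ z) :
    (lG σ n z).det ≠ 0 :=
  det_gram_ne_zero_iff_linearIndependent.2 (h.comp _ (Fin.castLE_injective hmn))

theorem hasDerivAt_iteratedDeriv_s8 {σ : ℂ → H} {z : ℂ} (h : AnalyticAt ℂ σ z) (n : ℕ) :
    HasDerivAt (iteratedDeriv n σ) (iteratedDeriv (n + 1) σ z) z := by
  rw [iteratedDeriv_succ, iteratedDeriv_eq_iterate]
  exact (h.iterated_deriv n).differentiableAt.hasDerivAt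

theorem hasWirtingerDerivAt_det_jetInner {σ : ℂ → H} {z : ℂ} (h : AnalyticAt ℂ σ z) {m : ℕ}
    (r c : Fin m → ℕ) :
    HasWirtingerDerivAt (fun z => det (of fun a b => jetInner σ z (r a) (c b)))
      (∑ l, det (of fun a b => jetInner σ z (r a) (Function.update c l (c l + 1) b)))
      (∑ l, det (of fun a b => jetInner σ z (Function.update r l (r l + 1) a) (c b))) z := by
  refine (HasWirtingerDerivAt.det (M := fun z => of fun a b => jetInner σ z (r a) (c b))
    (P := of fun a b => jetInner σ z (r a) (c b + 1))
    (Q := of fun a b => jetInner σ z (r a + 1) (c b)) fun a b =>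
      .inner (hasDerivAt_iteratedDeriv_s8 h _) (hasDerivAt_iteratedDeriv_s8 h _)).congr_derivs ?_ ?_
  · refine Finset.sum_congr rfl fun l _ => congrArg Matrix.det ?_
    ext a b
    simp only [updateCol_apply, of_apply, Function.update_apply]
    split_ifs <;> simp
  · refine Finset.sum_congr rfl fun l _ => congrArg Matrix.det ?_
    ext a b
    simp only [updateRow_apply, of_apply, Function.update_apply]
    split_ifs <;> simp

theorem sum_det_update_succ (M : ℕ → ℕ → ℂ) (n : ℕ) (r : Fin (n + 1) → ℕ) :
    ∑ l, det (of fun a b => M (r a) (Function.update Fin.val l ((l : ℕ) + 1) b)) =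
      det (of fun a b : Fin (n + 1) =>
        M (r a) (Function.update Fin.val (Fin.last n) (n + 1) b)) := by
  rw [Fin.sum_univ_castSucc, Finset.sum_eq_zero, zero_add]
  · rfl
  · intro l _
    refine det_zero_of_column_eq (i := l.castSucc) (j := l.succ) (Fin.castSucc_lt_succ).ne ?_
    intro a
    simp [Function.update_of_ne (Fin.castSucc_lt_succ (i := l)).ne']

theorem sum_det_update_succ' (M : ℕ → ℕ → ℂ) (n : ℕ) (c : Fin (n + 1) → ℕ) :
    ∑ l, det (of fun a b => M (Function.update Fin.val l ((l : ℕ) + 1) a) (c b)) =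
      det (of fun a b : Fin (n + 1) =>
        M (Function.update Fin.val (Fin.last n) (n + 1) a) (c b)) := by
  have h := sum_det_update_succ (fun i j => M j i) n c
  rw [← det_transpose] at h
  refine Eq.trans (Finset.sum_congr rfl fun l _ => ?_) h
  rw [← det_transpose]
  rfl

theorem hasWirtingerDerivAt_det_lG {σ : ℂ → H} {z : ℂ} (h : AnalyticAt ℂ σ z) (n : ℕ) :
    HasWirtingerDerivAt (fun z => (lG σ (n + 1) z).det)
      (borderedMinor (jetInner σ z) n n (n + 1)) (borderedMinor (jetInner σ z) n (n + 1) n) z := by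
  refine (hasWirtingerDerivAt_det_jetInner h Fin.val Fin.val).congr_derivs ?_ ?_
  · rw [sum_det_update_succ, borderedMinor, update_val_last]
  · rw [sum_det_update_succ', borderedMinor, update_val_last]

theorem hasWirtingerDerivAt_borderedMinor {σ : ℂ → H} {z : ℂ} (h : AnalyticAt ℂ σ z) (n : ℕ) :
    ∃ p, HasWirtingerDerivAt (fun z => borderedMinor (jetInner σ z) n n (n + 1))
      p (borderedMinor (jetInner σ z) n (n + 1) (n + 1)) z := by
  simp only [borderedMinor, update_val_last]
  refine ⟨_, (hasWirtingerDerivAt_det_jetInner h Fin.val _).congr_derivs rfl ?_⟩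
  rw [sum_det_update_succ']

/-- The expression `f ∂∂̄f - ∂f ∂̄f` scales by `|ψ|⁴` when `f` is multiplied by `|ψ|²`, `ψ`
holomorphic. -/
theorem mul_sub_mul_of_eq_normSq_mul {U : Set ℂ} (hU : IsOpen U) {ψ f g f₁ f₂ f₁₂ g₁ g₂ g₁₂ : ℂ → ℂ}
    (hψ : DifferentiableOn ℂ ψ U) (hfg : ∀ z ∈ U, conj (ψ z) * ψ z * g z = f z)
    (hf : ∀ z ∈ U, HasWirtingerDerivAt f (f₁ z) (f₂ z) z)
    (hg : ∀ z ∈ U, HasWirtingerDerivAt g (g₁ z) (g₂ z) z)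
    (hf₁ : ∀ z ∈ U, ∃ p, HasWirtingerDerivAt f₁ p (f₁₂ z) z)
    (hg₁ : ∀ z ∈ U, ∃ p, HasWirtingerDerivAt g₁ p (g₁₂ z) z) {z : ℂ} (hz : z ∈ U) :
    f z * f₁₂ z - f₁ z * f₂ z =
      (conj (ψ z) * ψ z) ^ 2 * (g z * g₁₂ z - g₁ z * g₂ z) := by
  have dψ (w : ℂ) (hw : w ∈ U) : HasDerivAt ψ (deriv ψ w) w :=
    (hψ.differentiableAt (hU.mem_nhds hw)).hasDerivAt
  have first (w : ℂ) (hw : w ∈ U) :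
      f₁ w = conj (ψ w) * (deriv ψ w * g w + ψ w * g₁ w) ∧
      f₂ w = ψ w * (conj (deriv ψ w) * g w + conj (ψ w) * g₂ w) := by
    have h := (((HasWirtingerDerivAt.conj_of_hasDerivAt (dψ w hw)).mul
      (.of_hasDerivAt (dψ w hw))).mul (hg w hw)).congr_of_eventuallyEq
        (g := f) (by filter_upwards [hU.mem_nhds hw] with x hx using (hfg x hx).symm)
    obtain ⟨e₁, e₂⟩ := (hf w hw).unique h
    exact ⟨by rw [e₁]; ring, by rw [e₂]; ring⟩
  obtain ⟨p, hp⟩ := hf₁ z hz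
  obtain ⟨p', hp'⟩ := hg₁ z hz
  have ddψ : HasDerivAt (deriv ψ) (deriv (deriv ψ) z) z :=
    ((hψ.deriv hU).differentiableAt (hU.mem_nhds hz)).hasDerivAt
  have h := ((HasWirtingerDerivAt.conj_of_hasDerivAt (dψ z hz)).mul
    (((HasWirtingerDerivAt.of_hasDerivAt ddψ).mul (hg z hz)).add
      ((HasWirtingerDerivAt.of_hasDerivAt (dψ z hz)).mul hp'))).congr_of_eventuallyEq
        (g := f₁) (by filter_upwards [hU.mem_nhds hz] with x hx using (first x hx).1)
  rw [(hp.unique h).2, (first z hz).1, (first z hz).2, ← hfg z hz]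
  ring

/-- `D_{n+2} D_n` is multiplied by `|ψ|⁴` when `D_{n+1}` is multiplied by `|ψ|²`, where `D_m` is the
determinant of the `m × m` jet Gram matrix. -/
theorem det_lG_mul_det_lG_s8 {U : Set ℂ} (hU : IsOpen U) {σ : ℂ → H} {σ' : ℂ → H'} {ψ : ℂ → ℂ}
    (hσ : DifferentiableOn ℂ σ U) (hσ' : DifferentiableOn ℂ σ' U) (hψ : DifferentiableOn ℂ ψ U)
    {n : ℕ} (h : ∀ z ∈ U, (‖ψ z‖ : ℂ) ^ 2 * (lG σ' (n + 1) z).det = (lG σ (n + 1) z).det)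
    {z : ℂ} (hz : z ∈ U) (hn : (lG σ n z).det ≠ 0) (hn' : (lG σ' n z).det ≠ 0) :
    (lG σ (n + 2) z).det * (lG σ n z).det =
      (‖ψ z‖ : ℂ) ^ 4 * ((lG σ' (n + 2) z).det * (lG σ' n z).det) := by
  have an (w : ℂ) (hw : w ∈ U) : AnalyticAt ℂ σ w := hσ.analyticAt (hU.mem_nhds hw)
  have an' (w : ℂ) (hw : w ∈ U) : AnalyticAt ℂ σ' w := hσ'.analyticAt (hU.mem_nhds hw)
  have key := mul_sub_mul_of_eq_normSq_mul hU hψ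
    (fun w hw => by rw [Complex.conj_mul']; exact h w hw)
    (fun w hw => hasWirtingerDerivAt_det_lG (an w hw) n)
    (fun w hw => hasWirtingerDerivAt_det_lG (an' w hw) n)
    (fun w hw => hasWirtingerDerivAt_borderedMinor (an w hw) n)
    (fun w hw => hasWirtingerDerivAt_borderedMinor (an' w hw) n) hz
  have toda := borderedMinor_mul_sub (jetInner σ z) n hn
  have toda' := borderedMinor_mul_sub (jetInner σ' z) n hn'
  rw [borderedMinor_self] at toda toda'
  change (lG σ (n + 1) z).det * _ - _ = (lG σ (n + 2) z).det * (lG σ n z).det at toda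
  change (lG σ' (n + 1) z).det * _ - _ = (lG σ' (n + 2) z).det * (lG σ' n z).det at toda'
  rw [← toda, ← toda', key, Complex.conj_mul']
  ring

/-- The metrics `g` and `f` on a line bundle over `U` are related by a holomorphic nowhere-vanishing
change of frame. -/
def FrameEquivOn (U : Set ℂ) (g f : ℂ → ℂ) : Prop :=
  ∃ ψ : ℂ → ℂ, DifferentiableOn ℂ ψ U ∧ (∀ z ∈ U, ψ z ≠ 0) ∧
    ∀ z ∈ U, (‖ψ z‖ : ℂ) ^ 2 * g z = f z

theorem FrameEquivOn.of_mul_eq {U : Set ℂ} {ψ f f' g g' : ℂ → ℂ} (hψ : DifferentiableOn ℂ ψ U)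
    (hψ₀ : ∀ z ∈ U, ψ z ≠ 0) (h : FrameEquivOn U g f)
    (hmul : ∀ z ∈ U, f z * f' z = (‖ψ z‖ : ℂ) ^ 4 * (g z * g' z)) (hf : ∀ z ∈ U, f z ≠ 0) :
    FrameEquivOn U g' f' := by
  obtain ⟨χ, hχ, hχ₀, e⟩ := h
  refine ⟨fun z => ψ z ^ 2 / χ z, (hψ.pow 2).div hχ hχ₀,
    fun z hz => div_ne_zero (pow_ne_zero 2 (hψ₀ z hz)) (hχ₀ z hz), fun z hz => ?_⟩
  have hχn : (‖χ z‖ : ℂ) ≠ 0 := by simpa using hχ₀ z hz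
  apply mul_left_cancel₀ (hf z hz)
  rw [hmul z hz, ← e z hz]
  push_cast [norm_div, norm_pow]
  field_simp

section

variable {U : Set ℂ} {σ : ℂ → H} {σ' : ℂ → H'} {N : ℕ}

theorem frameEquivOn_det_lG_of_succ (hU : IsOpen U) (hσ : DifferentiableOn ℂ σ U)
    (hσ' : DifferentiableOn ℂ σ' U) (hD : ∀ n ≤ N, ∀ z ∈ U, (lG σ n z).det ≠ 0)
    (hD' : ∀ n ≤ N, ∀ z ∈ U, (lG σ' n z).det ≠ 0) {n : ℕ} (hn : n + 2 ≤ N)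
    (h₁ : FrameEquivOn U (fun z => (lG σ' (n + 1) z).det) fun z => (lG σ (n + 1) z).det)
    (h₂ : FrameEquivOn U (fun z => (lG σ' (n + 2) z).det) fun z => (lG σ (n + 2) z).det) :
    FrameEquivOn U (fun z => (lG σ' n z).det) fun z => (lG σ n z).det := by
  obtain ⟨ψ, hψ, hψ₀, e⟩ := h₁
  exact h₂.of_mul_eq hψ hψ₀ (fun z hz => det_lG_mul_det_lG_s8 hU hσ hσ' hψ e hz
    (hD n (by lia) z hz) (hD' n (by lia) z hz)) (hD _ hn)

theorem frameEquivOn_det_lG_add_two (hU : IsOpen U) (hσ : DifferentiableOn ℂ σ U)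
    (hσ' : DifferentiableOn ℂ σ' U) (hD : ∀ n ≤ N, ∀ z ∈ U, (lG σ n z).det ≠ 0)
    (hD' : ∀ n ≤ N, ∀ z ∈ U, (lG σ' n z).det ≠ 0) {n : ℕ} (hn : n ≤ N)
    (h₀ : FrameEquivOn U (fun z => (lG σ' n z).det) fun z => (lG σ n z).det)
    (h₁ : FrameEquivOn U (fun z => (lG σ' (n + 1) z).det) fun z => (lG σ (n + 1) z).det) :
    FrameEquivOn U (fun z => (lG σ' (n + 2) z).det) fun z => (lG σ (n + 2) z).det := by
  obtain ⟨ψ, hψ, hψ₀, e⟩ := h₁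
  refine h₀.of_mul_eq hψ hψ₀ (fun z hz => ?_) (hD _ hn)
  rw [mul_comm, det_lG_mul_det_lG_s8 hU hσ hσ' hψ e hz (hD n hn z hz) (hD' n hn z hz),
    mul_comm (det _)]

end

theorem det_lG_one {E : Type*} [NormedAddCommGroup E] [InnerProductSpace ℂ E] (σ : ℂ → E)
    (z : ℂ) : (lG σ 1 z).det = ⟪σ z, σ z⟫ := by
  simp [lG]

/-- For `(k+1)`-nondegenerate holomorphic maps `σ, σ̃` on an open `Ω ⊆ ℂ` (`k ≥ 1`):
the determinant bundles `det J_k` and `det J_{k+1}` of the two line bundles are locally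
equivalent if and only if the line bundles themselves are locally equivalent. -/
theorem stmt8 (Ω : Set ℂ) (hΩ : IsOpen Ω)
    (k : ℕ) (hk : 1 ≤ k) (σ : ℂ → H) (σ' : ℂ → H')
    (hσ : DifferentiableOn ℂ σ Ω) (hσ' : DifferentiableOn ℂ σ' Ω)
    (hnd : ∀ z ∈ Ω, LinearIndependent ℂ fun i : Fin (k + 2) => iteratedDeriv (i : ℕ) σ z)
    (hnd' : ∀ z ∈ Ω, LinearIndependent ℂ fun i : Fin (k + 2) => iteratedDeriv (i : ℕ) σ' z) :
    (∀ z₀ ∈ Ω, ∃ U : Set ℂ, IsOpen U ∧ z₀ ∈ U ∧ U ⊆ Ω ∧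
      ∃ ψ ψ' : ℂ → ℂ,
        DifferentiableOn ℂ ψ U ∧ (∀ z ∈ U, ψ z ≠ 0) ∧
        DifferentiableOn ℂ ψ' U ∧ (∀ z ∈ U, ψ' z ≠ 0) ∧
        (∀ z ∈ U, (‖ψ z‖ : ℂ) ^ 2 * (lG σ' (k + 1) z).det = (lG σ (k + 1) z).det) ∧
        (∀ z ∈ U, (‖ψ' z‖ : ℂ) ^ 2 * (lG σ' (k + 2) z).det = (lG σ (k + 2) z).det)) ↔
    (∀ z₀ ∈ Ω, ∃ U : Set ℂ, IsOpen U ∧ z₀ ∈ U ∧ U ⊆ Ω ∧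
      ∃ φ : ℂ → ℂ, DifferentiableOn ℂ φ U ∧ (∀ z ∈ U, φ z ≠ 0) ∧
        ∀ z ∈ U, (‖φ z‖ : ℂ) ^ 2 * ⟪σ' z, σ' z⟫ = ⟪σ z, σ z⟫) := by
  have hD {U : Set ℂ} (hUΩ : U ⊆ Ω) (n : ℕ) (hn : n ≤ k + 2) (z : ℂ) (hz : z ∈ U) :
      (lG σ n z).det ≠ 0 := det_lG_ne_zero hn (hnd z (hUΩ hz))
  have hD' {U : Set ℂ} (hUΩ : U ⊆ Ω) (n : ℕ) (hn : n ≤ k + 2) (z : ℂ) (hz : z ∈ U) :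
      (lG σ' n z).det ≠ 0 := det_lG_ne_zero hn (hnd' z (hUΩ hz))
  constructor
  · intro h z₀ hz₀
    obtain ⟨U, hU, hzU, hUΩ, ψ, ψ', hψ, hψ₀, hψ', hψ₀', e, e'⟩ := h z₀ hz₀
    refine ⟨U, hU, hzU, hUΩ, ?_⟩
    have descend (n : ℕ) (hn : n ≤ k + 1) :
        FrameEquivOn U (fun z => (lG σ' n z).det) (fun z => (lG σ n z).det) ∧
        FrameEquivOn U (fun z => (lG σ' (n + 1) z).det) fun z => (lG σ (n + 1) z).det := by
      induction hn using Nat.decreasingInduction with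
      | self => exact ⟨⟨ψ, hψ, hψ₀, e⟩, ⟨ψ', hψ', hψ₀', e'⟩⟩
      | of_succ n hn ih =>
        exact ⟨frameEquivOn_det_lG_of_succ hU (hσ.mono hUΩ) (hσ'.mono hUΩ) (hD hUΩ) (hD' hUΩ)
          (by lia) ih.1 ih.2, ih.1⟩
    have one := (descend 1 (by lia)).1
    simpa only [det_lG_one, FrameEquivOn] using one
  · intro h z₀ hz₀
    obtain ⟨U, hU, hzU, hUΩ, φ, hφ, hφ₀, e⟩ := h z₀ hz₀
    have ascend (n : ℕ) (hn : n ≤ k + 1) :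
        FrameEquivOn U (fun z => (lG σ' n z).det) (fun z => (lG σ n z).det) ∧
        FrameEquivOn U (fun z => (lG σ' (n + 1) z).det) fun z => (lG σ (n + 1) z).det := by
      induction n with
      | zero => exact ⟨⟨fun _ => 1, by simp, by simp, by simp⟩,
          ⟨φ, hφ, hφ₀, fun z hz => by
            simpa only [← det_lG_one] using e z hz⟩⟩
      | succ n ih =>
        obtain ⟨h₀, h₁⟩ := ih (by lia)
        exact ⟨h₁, frameEquivOn_det_lG_add_two hU (hσ.mono hUΩ) (hσ'.mono hUΩ) (hD hUΩ)
          (hD' hUΩ) (by lia) h₀ h₁⟩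
    obtain ⟨⟨ψ, hψ, hψ₀, e₁⟩, ⟨ψ', hψ', hψ₀', e₂⟩⟩ := ascend (k + 1) le_rfl
    exact ⟨U, hU, hzU, hUΩ, ψ, ψ', hψ, hψ₀, hψ', hψ₀', e₁, e₂⟩
end
end

section
/- Let σ_1,…,σ_n : Ω → H be a holomorphic frame with σ_1(z),…,σ_n(z) linearly independent for every z ∈ Ω (0-nondegenerate), and set h(z) := h_0(z) = (⟨σ_j(z),σ_i(z)⟩)_{i,j=1}^n, which is invertible for every z. Then for every z ∈ Ω, ∂/∂z̄ ( h⁻¹ · ∂h/∂z )(z) = (det h(z))⁻¹ · h(z)⁻¹ · h_1(z); that is, the curvature of the bundle spanned by the frame is given by 𝒦(z) = (det h(z))⁻¹ h(z)⁻¹ h_1(z) dz̄∧dz. -/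
open Matrix

noncomputable section

variable {H : Type*} [NormedAddCommGroup H] [InnerProductSpace ℂ H] [CompleteSpace H]

/-- `⟪x, y⟫` is the Mathlib inner product (conjugate-linear in the first argument);
it equals the paper's inner product `⟨y, x⟩`, which is linear in the first argument. -/
local notation "⟪" x ", " y "⟫" => (inner ℂ x y : ℂ)

/-- `fGram σ z` is the metric matrix `h(z) = (⟨σ_j(z),σ_i(z)⟩_paper)_{i,j} = (⟪σ_i,σ_j⟫)_{i,j}`
of the frame `σ_1,…,σ_n`. -/
def fGram {n : ℕ} (σ : Fin n → ℂ → H) (z : ℂ) : Matrix (Fin n) (Fin n) ℂ :=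
  Matrix.of fun i j => ⟪σ i z, σ j z⟫

theorem Dzbar_mul {f g : ℂ → ℂ} {z : ℂ} (hf : DifferentiableAt ℝ f z)
    (hg : DifferentiableAt ℝ g z) :
    Dzbar (fun w => f w * g w) z = Dzbar f z * g z + f z * Dzbar g z := by
  simp only [Dzbar, fderiv_fun_mul hf hg, _root_.add_apply,
    _root_.smul_apply, smul_eq_mul]
  ring

theorem Dzbar_sum {κ : Type*} (s : Finset κ) {f : κ → ℂ → ℂ} {z : ℂ}
    (hf : ∀ k ∈ s, DifferentiableAt ℝ (f k) z) :
    Dzbar (fun w => ∑ k ∈ s, f k w) z = ∑ k ∈ s, Dzbar (f k) z := by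
  simp only [Dzbar, fderiv_fun_sum hf, _root_.sum_apply, Finset.smul_sum,
    ← Finset.sum_add_distrib]

theorem mDzbar_congr {ι : Type*} {M N : ℂ → Matrix ι ι ℂ} {z : ℂ} (h : M =ᶠ[nhds z] N) :
    mDzbar M z = mDzbar N z := by
  ext i j
  have hij : (fun w => M w i j) =ᶠ[nhds z] fun w => N w i j := h.fun_comp fun X => X i j
  simp only [mDzbar, Dzbar, Matrix.of_apply, hij.fderiv_eq]

/-- Leibniz rule for the entrywise `∂/∂z̄`. -/
theorem mDzbar_mul {ι : Type*} [Fintype ι] {M N : ℂ → Matrix ι ι ℂ} {z : ℂ}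
    (hM : ∀ i j, DifferentiableAt ℝ (fun w => M w i j) z)
    (hN : ∀ i j, DifferentiableAt ℝ (fun w => N w i j) z) :
    mDzbar (fun w => M w * N w) z = mDzbar M z * N z + M z * mDzbar N z := by
  ext i j
  simp only [mDzbar, Matrix.of_apply, Matrix.add_apply, Matrix.mul_apply]
  rw [Dzbar_sum _ fun k _ => (hM i k).fun_mul (hN k j), ← Finset.sum_add_distrib]
  exact Finset.sum_congr rfl fun k _ => Dzbar_mul (hM i k) (hN k j)

theorem differentiableAt_matrix_mul {ι : Type*} [Fintype ι] {M N : ℂ → Matrix ι ι ℂ} {z : ℂ}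
    (hM : ∀ i j, DifferentiableAt ℝ (fun w => M w i j) z)
    (hN : ∀ i j, DifferentiableAt ℝ (fun w => N w i j) z) (i j : ι) :
    DifferentiableAt ℝ (fun w => (M w * N w) i j) z := by
  simp only [Matrix.mul_apply]
  exact DifferentiableAt.fun_sum fun k _ => (hM i k).fun_mul (hN k j)

theorem differentiableAt_matrix_det {ι : Type*} [Fintype ι] [DecidableEq ι]
    {M : ℂ → Matrix ι ι ℂ} {z : ℂ} (hM : ∀ i j, DifferentiableAt ℝ (fun w => M w i j) z) :
    DifferentiableAt ℝ (fun w => (M w).det) z := by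
  simp only [Matrix.det_apply']
  exact DifferentiableAt.fun_sum fun p _ => (differentiableAt_const _).fun_mul
    (HasFDerivAt.finsetProd fun i _ => (hM (p i) i).hasFDerivAt).differentiableAt

theorem differentiableAt_matrix_inv {ι : Type*} [Fintype ι] [DecidableEq ι]
    {M : ℂ → Matrix ι ι ℂ} {z : ℂ} (hM : ∀ i j, DifferentiableAt ℝ (fun w => M w i j) z)
    (hz : (M z).det ≠ 0) (i j : ι) : DifferentiableAt ℝ (fun w => (M w)⁻¹ i j) z := by
  simp only [Matrix.inv_def, Ring.inverse_eq_inv', Matrix.smul_apply, Matrix.adjugate_apply,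
    smul_eq_mul]
  refine ((differentiableAt_matrix_det hM).fun_inv hz).fun_mul
    (differentiableAt_matrix_det fun k l => ?_)
  by_cases hk : k = j
  · simp [hk]
  · simpa [Matrix.updateRow_apply, hk] using hM k l

theorem hasFDerivAt_inner_of_differentiableAt {F : Type*} [NormedAddCommGroup F]
    [InnerProductSpace ℂ F] {f g : ℂ → F} {z : ℂ}
    (hf : DifferentiableAt ℂ f z) (hg : DifferentiableAt ℂ g z) :
    HasFDerivAt (fun w => ⟪f w, g w⟫)
      ((fderivInnerCLM ℂ (f z, g z)).comp
        (((fderiv ℂ f z).restrictScalars ℝ).prod ((fderiv ℂ g z).restrictScalars ℝ))) z :=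
  (hf.hasFDerivAt.restrictScalars ℝ).inner ℂ (hg.hasFDerivAt.restrictScalars ℝ)

theorem fderiv_inner_of_differentiableAt {F : Type*} [NormedAddCommGroup F] [InnerProductSpace ℂ F]
    {f g : ℂ → F} {z : ℂ}
    (hf : DifferentiableAt ℂ f z) (hg : DifferentiableAt ℂ g z) (v : ℂ) :
    fderiv ℝ (fun w => ⟪f w, g w⟫) z v =
      v * ⟪f z, deriv g z⟫ + (starRingEnd ℂ) v * ⟪deriv f z, g z⟫ := by
  rw [(hasFDerivAt_inner_of_differentiableAt hf hg).fderiv]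
  simp [fderivInnerCLM_apply, fderiv_eq_smul_deriv, inner_smul_left, inner_smul_right]

theorem Dz_inner {F : Type*} [NormedAddCommGroup F] [InnerProductSpace ℂ F]
    {f g : ℂ → F} {z : ℂ}
    (hf : DifferentiableAt ℂ f z) (hg : DifferentiableAt ℂ g z) :
    Dz (fun w => ⟪f w, g w⟫) z = ⟪f z, deriv g z⟫ := by
  simp only [Dz, fderiv_inner_of_differentiableAt hf hg, smul_eq_mul, map_one, Complex.conj_I]
  linear_combination (-1 / 2 * ⟪f z, deriv g z⟫ + 1 / 2 * ⟪deriv f z, g z⟫) * Complex.I_mul_I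

theorem Dzbar_inner {F : Type*} [NormedAddCommGroup F] [InnerProductSpace ℂ F]
    {f g : ℂ → F} {z : ℂ}
    (hf : DifferentiableAt ℂ f z) (hg : DifferentiableAt ℂ g z) :
    Dzbar (fun w => ⟪f w, g w⟫) z = ⟪deriv f z, g z⟫ := by
  simp only [Dzbar, fderiv_inner_of_differentiableAt hf hg, smul_eq_mul, map_one, Complex.conj_I]
  linear_combination (1 / 2 * ⟪f z, deriv g z⟫ - 1 / 2 * ⟪deriv f z, g z⟫) * Complex.I_mul_I

theorem isUnit_det_fGram {F : Type*} [NormedAddCommGroup F] [InnerProductSpace ℂ F]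
    {n : ℕ} {σ : Fin n → ℂ → F} {z : ℂ}
    (h : LinearIndependent ℂ fun i => σ i z) : IsUnit (fGram σ z).det :=
  (Matrix.det_gram_ne_zero_iff_linearIndependent.mpr h).isUnit

/-- Schur complement form of `h_1`. -/
theorem hMat_one_eq {F : Type*} [NormedAddCommGroup F] [InnerProductSpace ℂ F]
    {n : ℕ} {σ : Fin n → ℂ → F} {z : ℂ} (h : IsUnit (fGram σ z).det) :
    hMat σ 1 z = (fGram σ z).det •
      ((Matrix.of fun i j => ⟪deriv (σ i) z, deriv (σ j) z⟫) -
        (Matrix.of fun i j => ⟪deriv (σ i) z, σ j z⟫) *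
          ((fGram σ z)⁻¹ * Matrix.of fun i j => ⟪σ i z, deriv (σ j) z⟫)) := by
  ext i j
  let e : Fin n ⊕ Unit ≃ (Fin 1 × Fin n) ⊕ Unit :=
    Equiv.sumCongr (Equiv.uniqueProd (Fin n) (Fin 1)).symm (Equiv.refl Unit)
  let := Matrix.invertibleOfIsUnitDet _ h
  rw [hMat, Matrix.of_apply, ← Matrix.det_submatrix_equiv_self e]
  trans (Matrix.fromBlocks (fGram σ z) (Matrix.of fun k (_ : Unit) => ⟪σ k z, deriv (σ j) z⟫)
    (Matrix.of fun (_ : Unit) k => ⟪deriv (σ i) z, σ k z⟫)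
    (Matrix.of fun _ _ => ⟪deriv (σ i) z, deriv (σ j) z⟫)).det
  · congr 1
    ext (a | a) (b | b) <;> simp [e, fGram, iteratedDeriv_one]
  · rw [Matrix.det_fromBlocks₁₁, Matrix.det_unique (n := Unit), Matrix.invOf_eq_nonsing_inv,
      Matrix.mul_assoc]
    simp [Matrix.mul_apply]

/-- Curvature formula: for a `0`-nondegenerate holomorphic frame `σ_1,…,σ_n` with metric `h`,
`∂/∂z̄ (h⁻¹·∂h/∂z)(z) = (det h(z))⁻¹·h(z)⁻¹·h_1(z)` for every `z ∈ Ω`. -/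
theorem stmt9 {n : ℕ} (Ω : Set ℂ) (hΩ : IsOpen Ω)
    (σ : Fin n → ℂ → H) (hσ : ∀ i, DifferentiableOn ℂ (σ i) Ω)
    (hnd : ∀ z ∈ Ω, LinearIndependent ℂ fun i => σ i z) :
    ∀ z ∈ Ω,
      mDzbar (fun w => (fGram σ w)⁻¹ * mDz (fGram σ) w) z =
        ((fGram σ z).det)⁻¹ • ((fGram σ z)⁻¹ * hMat σ 1 z) := by
  intro z hz
  have hinv : ∀ w ∈ Ω, IsUnit (fGram σ w).det := fun w hw =>
    isUnit_det_fGram (hnd w hw)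
  have hΩz : Ω ∈ nhds z := hΩ.mem_nhds hz
  have hd : ∀ i, ∀ w ∈ Ω, DifferentiableAt ℂ (σ i) w := fun i w hw =>
    (hσ i).differentiableAt (hΩ.mem_nhds hw)
  have hd' : ∀ i, DifferentiableAt ℂ (deriv (σ i)) z := fun i =>
    ((hσ i).deriv hΩ).differentiableAt hΩz
  let A : ℂ → Matrix (Fin n) (Fin n) ℂ := fun w => Matrix.of fun i j => ⟪σ i w, deriv (σ j) w⟫
  have hDz : ∀ w ∈ Ω, mDz (fGram σ) w = A w := fun w hw => by
    ext i j
    exact Dz_inner (hd i w hw) (hd j w hw)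
  have hh : ∀ i j, DifferentiableAt ℝ (fun w => fGram σ w i j) z := fun i j =>
    (hasFDerivAt_inner_of_differentiableAt (hd i z hz) (hd j z hz)).differentiableAt
  have hAd : ∀ i j, DifferentiableAt ℝ (fun w => A w i j) z := fun i j =>
    (hasFDerivAt_inner_of_differentiableAt (hd i z hz) (hd' j)).differentiableAt
  have hG : ∀ i j, DifferentiableAt ℝ (fun w => ((fGram σ w)⁻¹ * A w) i j) z :=
    differentiableAt_matrix_mul (differentiableAt_matrix_inv hh (hinv z hz).ne_zero) hAd
  have hcongr : mDzbar (fun w => (fGram σ w)⁻¹ * mDz (fGram σ) w) z =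
      mDzbar (fun w => (fGram σ w)⁻¹ * A w) z :=
    mDzbar_congr (by filter_upwards [hΩz] with w hw; rw [hDz w hw])
  have hprod : mDzbar A z = mDzbar (fGram σ) z * ((fGram σ z)⁻¹ * A z) +
      fGram σ z * mDzbar (fun w => (fGram σ w)⁻¹ * A w) z := by
    rw [← mDzbar_mul hh hG]
    refine mDzbar_congr ?_
    filter_upwards [hΩz] with w hw
    rw [Matrix.mul_nonsing_inv_cancel_left _ _ (hinv w hw)]
  have hC : mDzbar (fGram σ) z = Matrix.of fun i j => ⟪deriv (σ i) z, σ j z⟫ := by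
    ext i j
    exact Dzbar_inner (hd i z hz) (hd j z hz)
  have hB : mDzbar A z = Matrix.of fun i j => ⟪deriv (σ i) z, deriv (σ j) z⟫ := by
    ext i j
    exact Dzbar_inner (hd i z hz) (hd' j)
  have hdet : hMat σ 1 z = (fGram σ z).det •
      (mDzbar A z - mDzbar (fGram σ) z * ((fGram σ z)⁻¹ * A z)) := by
    rw [hB, hC]
    exact hMat_one_eq (hinv z hz)
  rw [hcongr, hdet, Matrix.mul_smul, smul_smul, inv_mul_cancel₀ (hinv z hz).ne_zero, one_smul,
    hprod, add_sub_cancel_left, Matrix.nonsing_inv_mul_cancel_left _ _ (hinv z hz)]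
end
end

section
/- Let H be a complex Hilbert space whose inner product ⟨·,·⟩ is linear in the first and conjugate-linear in the second argument, let Ω ⊆ ℂ^m be open, and let s_1,…,s_n : Ω → H be holomorphic with s_1(z),…,s_n(z) linearly independent for every z ∈ Ω; set h(z) := (⟨s_q(z), s_p(z)⟩)_{p,q=1}^n. For 1 ≤ i,j ≤ m let h_{ij}(z) be the n×n matrix whose (p,q) entry is the determinant of the (n+1)×(n+1) matrix whose (a,b) entry is ⟨u_b, v_a⟩, where (u_1,…,u_{n+1}) = (s_1(z),…,s_n(z), ∂s_q/∂z_i(z)) and (v_1,…,v_{n+1}) = (s_1(z),…,s_n(z), ∂s_p/∂z_j(z)). Then for all 1 ≤ i,j ≤ m and z ∈ Ω, ∂²h/∂z̄_j∂z_i (z) − (∂h/∂z̄_j)(z)·h(z)⁻¹·(∂h/∂z_i)(z) = (det h(z))⁻¹ · h_{ij}(z); that is, the curvature of the bundle spanned by the frame is 𝒦(z) = (det h(z))⁻¹ h(z)⁻¹ Σ_{i,j=1}^m h_{ij}(z) dz̄_j∧dz_i. -/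
open Matrix

noncomputable section

/-- Wirtinger derivative `∂g/∂z_i := (1/2)(∂g/∂x_i − i·∂g/∂y_i)` in the `i`-th coordinate of
`ℂ^m`, for `g` with values in a complex Banach space. -/
def DzV {m : ℕ} {E : Type*} [NormedAddCommGroup E] [NormedSpace ℂ E]
    (i : Fin m) (g : (Fin m → ℂ) → E) (z : Fin m → ℂ) : E :=
  (1 / 2 : ℂ) • (fderiv ℝ g z (Pi.single i 1) -
    Complex.I • fderiv ℝ g z (Pi.single i Complex.I))

/-- Wirtinger derivative `∂g/∂z̄_i := (1/2)(∂g/∂x_i + i·∂g/∂y_i)`. -/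
def DzbarV {m : ℕ} {E : Type*} [NormedAddCommGroup E] [NormedSpace ℂ E]
    (i : Fin m) (g : (Fin m → ℂ) → E) (z : Fin m → ℂ) : E :=
  (1 / 2 : ℂ) • (fderiv ℝ g z (Pi.single i 1) +
    Complex.I • fderiv ℝ g z (Pi.single i Complex.I))

variable {H : Type*} [NormedAddCommGroup H] [InnerProductSpace ℂ H] [CompleteSpace H]

local notation "⟪" x ", " y "⟫" => (inner ℂ x y : ℂ)

/-- The metric `h(z) = (⟨s_q(z),s_p(z)⟩_paper)_{p,q} = (⟪s_p(z),s_q(z)⟫)_{p,q}`. -/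
def fGramV {m n : ℕ} (s : Fin n → (Fin m → ℂ) → H) (z : Fin m → ℂ) :
    Matrix (Fin n) (Fin n) ℂ :=
  Matrix.of fun p q => ⟪s p z, s q z⟫

/-- The paper's matrix `h_{ij}(z)`: its `(p,q)` entry is the determinant of the
`(n+1)×(n+1)` matrix whose `(a,b)` entry is `⟨u_b, v_a⟩_paper = ⟪v_a, u_b⟫`, where
`u = (s_1(z),…,s_n(z), ∂s_q/∂z_i(z))` and `v = (s_1(z),…,s_n(z), ∂s_p/∂z_j(z))`. -/
def hMatV {m n : ℕ} (s : Fin n → (Fin m → ℂ) → H) (i j : Fin m) (z : Fin m → ℂ) :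
    Matrix (Fin n) (Fin n) ℂ :=
  Matrix.of fun p q =>
    (Matrix.of fun a b : Fin n ⊕ Unit =>
      ⟪Sum.elim (fun r => s r z) (fun _ => DzV j (s p) z) a,
        Sum.elim (fun r => s r z) (fun _ => DzV i (s q) z) b⟫).det

section Holomorphic

variable {E F : Type*} [NormedAddCommGroup E] [NormedSpace ℂ E]
  [NormedAddCommGroup F] [NormedSpace ℂ F]

/-- A holomorphic function on an open subset of a normed space is locally Lipschitz. -/
theorem exists_lipschitzOnWith_ball_of_differentiableOn {f : E → F} {U : Set E} (hU : IsOpen U)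
    (hf : DifferentiableOn ℂ f U) {c : E} (hc : c ∈ U) :
    ∃ r > 0, ∃ L : NNReal, Metric.ball c r ⊆ U ∧ LipschitzOnWith L f (Metric.ball c r) := by
  obtain ⟨R₁, hR₁, hR₁U⟩ := Metric.isOpen_iff.1 hU c hc
  obtain ⟨R₂, hR₂, hR₂f⟩ := Metric.continuousAt_iff.1
    (hf.continuousOn.continuousAt (hU.mem_nhds hc)) 1 one_pos
  set R := min R₁ R₂
  have hRpos : 0 < R := lt_min hR₁ hR₂
  have hball : ∀ x ∈ Metric.ball c (R / 2), Metric.ball x (R / 2) ⊆ Metric.ball c R := by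
    intro x hx
    refine Metric.ball_subset_ball' ?_
    rw [Metric.mem_ball] at hx
    linarith
  have hsub : Metric.ball c R ⊆ U := (Metric.ball_subset_ball (min_le_left _ _)).trans hR₁U
  have hsub' : Metric.ball c (R / 2) ⊆ U :=
    (Metric.ball_subset_ball (by linarith)).trans hsub
  have hval : ∀ y ∈ Metric.ball c R, dist (f y) (f c) < 1 := fun y hy =>
    hR₂f (lt_of_lt_of_le hy (min_le_right _ _))
  let : NormedSpace ℝ E := NormedSpace.restrictScalars ℝ ℂ E
  refine ⟨R / 2, half_pos hRpos, (2 / (R / 2)).toNNReal, hsub', ?_⟩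
  refine (convex_ball c (R / 2)).lipschitzOnWith_of_nnnorm_fderiv_le (𝕜 := ℂ)
    (fun x hx => hf.differentiableAt (hU.mem_nhds (hsub' hx))) fun x hx => ?_
  rw [← NNReal.coe_le_coe, coe_nnnorm, Real.coe_toNNReal _ (by positivity)]
  refine Complex.norm_fderiv_le_div_of_mapsTo_ball
    (hf.mono ((hball x hx).trans hsub)) (fun y hy => ?_) (half_pos hRpos)
  have h1 := hval y (hball x hx hy)
  have h2 := hval x (hball x hx (Metric.mem_ball_self (half_pos hRpos)))
  have h3 := dist_triangle_right (f y) (f x) (f c)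
  rw [Metric.mem_closedBall]
  linarith

/-- The derivative of a holomorphic function on an open subset of a normed space is continuous. -/
theorem continuousAt_fderiv_of_differentiableOn {f : E → F} {U : Set E} (hU : IsOpen U)
    (hf : DifferentiableOn ℂ f U) {c : E} (hc : c ∈ U) : ContinuousAt (fderiv ℂ f) c := by
  obtain ⟨r, hr, L, hrU, hL⟩ := exists_lipschitzOnWith_ball_of_differentiableOn hU hf hc
  have hdiff : ∀ y ∈ Metric.ball c r, DifferentiableAt ℂ f y := fun y hy =>
    hf.differentiableAt (hU.mem_nhds (hrU hy))
  refine continuousAt_of_locally_lipschitz (half_pos hr) (2 * L / (r / 2)) fun x hx => ?_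
  have hmem : ∀ y ∈ Metric.ball c (r / 2), y ∈ Metric.ball c r ∧ y + (x - c) ∈ Metric.ball c r := by
    intro y hy
    rw [Metric.mem_ball] at hy
    refine ⟨by rw [Metric.mem_ball]; linarith, ?_⟩
    rw [dist_eq_norm] at hx hy
    rw [Metric.mem_ball, dist_eq_norm, show y + (x - c) - c = (y - c) + (x - c) by abel]
    linarith [norm_add_le (y - c) (x - c)]
  have hshift : ∀ y ∈ Metric.ball c (r / 2),
      HasFDerivAt (fun y => f (y + (x - c)) - f y)
        (fderiv ℂ f (y + (x - c)) - fderiv ℂ f y) y := fun y hy =>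
    ((hasFDerivAt_comp_add_right (x - c)).2 (hdiff _ (hmem y hy).2).hasFDerivAt).sub
      (hdiff _ (hmem y hy).1).hasFDerivAt
  have hlip : ∀ y ∈ Metric.ball c (r / 2), ‖f (y + (x - c)) - f y‖ ≤ L * dist x c := by
    intro y hy
    have := hL.dist_le_mul _ (hmem y hy).2 _ (hmem y hy).1
    simpa [dist_eq_norm] using this
  have hcmem := Metric.mem_ball_self (x := c) (half_pos hr)
  have key := Complex.norm_fderiv_le_div_of_mapsTo_ball (R₂ := 2 * (L * dist x c))
    (fun y hy => (hshift y hy).differentiableAt.differentiableWithinAt)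
    (fun y hy => by
      rw [Metric.mem_closedBall, dist_eq_norm]
      linarith [norm_sub_le (f (y + (x - c)) - f y) (f (c + (x - c)) - f c),
        hlip y hy, hlip c hcmem]) (half_pos hr)
  rw [(hshift c hcmem).fderiv, add_sub_cancel] at key
  rw [dist_eq_norm]
  refine key.trans_eq ?_
  ring

/-- The directional derivatives of a holomorphic function on an open subset of a normed space are
holomorphic, by differentiating Cauchy's integral formula along complex lines. -/
theorem differentiableAt_fderiv_apply_of_differentiableOn [CompleteSpace F] {f : E → F} {U : Set E}
    (hU : IsOpen U) (hf : DifferentiableOn ℂ f U) {c : E} (hc : c ∈ U) (v : E) :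
    DifferentiableAt ℂ (fun w => fderiv ℂ f w v) c := by
  obtain ⟨r, hr, L, hrU, hL⟩ := exists_lipschitzOnWith_ball_of_differentiableOn hU hf hc
  have hdiff : ∀ y ∈ Metric.ball c r, DifferentiableAt ℂ f y := fun y hy =>
    hf.differentiableAt (hU.mem_nhds (hrU hy))
  set ρ : ℝ := r / 2 / (‖v‖ + 1) with hρ
  have hv : 0 < ‖v‖ + 1 := by positivity
  have hρpos : 0 < ρ := by positivity
  have hmem : ∀ w ∈ Metric.ball c (r / 2), ∀ ζ ∈ Metric.closedBall (0 : ℂ) ρ,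
      w + ζ • v ∈ Metric.ball c r := by
    intro w hw ζ hζ
    rw [mem_closedBall_zero_iff] at hζ
    rw [Metric.mem_ball, dist_eq_norm] at hw ⊢
    have h1 : ‖ζ • v‖ ≤ r / 2 := by
      rw [norm_smul]
      calc ‖ζ‖ * ‖v‖ ≤ ρ * (‖v‖ + 1) := by gcongr; linarith
        _ = r / 2 := by rw [hρ]; field_simp
    rw [show w + ζ • v - c = (w - c) + ζ • v by abel]
    linarith [norm_add_le (w - c) (ζ • v)]
  have hcirc : ∀ θ : ℝ, circleMap 0 ρ θ ∈ Metric.closedBall (0 : ℂ) ρ := fun θ =>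
    circleMap_mem_closedBall 0 hρpos.le θ
  set k : ℝ → ℂ := fun θ => deriv (circleMap 0 ρ) θ * (1 / (circleMap 0 ρ θ - 0) ^ 2) with hk
  have hkc : Continuous k := by
    simp only [hk, deriv_circleMap, sub_zero]
    refine ((continuous_circleMap 0 ρ).mul continuous_const).mul
      (continuous_const.div ((continuous_circleMap 0 ρ).pow 2) fun θ => ?_)
    exact pow_ne_zero _ (circleMap_ne_center hρpos.ne')
  have hcauchy : ∀ w ∈ Metric.ball c (r / 2),
      fderiv ℂ f w v = (2 * Real.pi * Complex.I : ℂ)⁻¹ •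
        ∫ θ in (0 : ℝ)..2 * Real.pi, k θ • f (w + circleMap 0 ρ θ • v) := by
    intro w hw
    have hline : ∀ ζ ∈ Metric.closedBall (0 : ℂ) ρ,
        HasDerivAt (fun ζ : ℂ => f (w + ζ • v)) (fderiv ℂ f (w + ζ • v) v) ζ := by
      intro ζ hζ
      refine (hdiff _ (hmem w hw ζ hζ)).hasFDerivAt.comp_hasDerivAt ζ ?_
      simpa using ((hasDerivAt_id ζ).smul_const v).const_add w
    have h1 := DifferentiableOn.deriv_eq_smul_circleIntegral hρpos
      (fun ζ hζ => (hline ζ hζ).differentiableAt.differentiableWithinAt)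
    rw [(hline 0 (Metric.mem_closedBall_self hρpos.le)).deriv, zero_smul, add_zero,
      circleIntegral] at h1
    simp only [smul_smul] at h1
    rw [← inv_smul_eq_iff₀ Complex.two_pi_I_ne_zero] at h1
    exact h1.symm
  have hpath : ∀ w, Continuous fun θ : ℝ => w + circleMap 0 ρ θ • v := fun w =>
    continuous_const.add ((continuous_circleMap 0 ρ).smul continuous_const)
  have hcont : ∀ w ∈ Metric.ball c (r / 2),
      Continuous fun θ : ℝ => k θ • f (w + circleMap 0 ρ θ • v) := fun w hw =>
    hkc.smul (continuous_iff_continuousAt.2 fun θ =>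
      ContinuousAt.comp (f := fun θ : ℝ => w + circleMap 0 ρ θ • v)
        (hdiff _ (hmem w hw _ (hcirc θ))).continuousAt (hpath w).continuousAt)
  have hcmem := Metric.mem_ball_self (x := c) (half_pos hr)
  have hnhds := Metric.ball_mem_nhds c (half_pos hr)
  have hcont' : Continuous fun θ : ℝ => k θ • fderiv ℂ f (c + circleMap 0 ρ θ • v) :=
    hkc.smul (continuous_iff_continuousAt.2 fun θ =>
      ContinuousAt.comp (f := fun θ : ℝ => c + circleMap 0 ρ θ • v)
        (continuousAt_fderiv_of_differentiableOn hU hf (hrU (hmem c hcmem _ (hcirc θ))))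
        (hpath c).continuousAt)
  have hint := (intervalIntegral.hasFDerivAt_integral_of_dominated_loc_of_lip
    (μ := MeasureTheory.volume) (𝕜 := ℂ) (a := 0) (b := 2 * Real.pi)
    (F := fun w θ => k θ • f (w + circleMap 0 ρ θ • v))
    (bound := fun θ => ‖k θ‖ * L) hnhds
    (Filter.eventually_of_mem hnhds fun w hw => (hcont w hw).aestronglyMeasurable)
    ((hcont c hcmem).intervalIntegrable _ _) hcont'.aestronglyMeasurable
    (Filter.Eventually.of_forall fun θ _ => LipschitzOnWith.of_dist_le_mul fun x hx y hy => by
      have := hL.dist_le_mul _ (hmem x hx _ (hcirc θ)) _ (hmem y hy _ (hcirc θ))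
      rw [dist_add_right] at this
      rw [dist_smul₀, Real.coe_nnabs, abs_of_nonneg (by positivity), mul_assoc]
      gcongr)
    ((hkc.norm.mul continuous_const).intervalIntegrable _ _)
    (Filter.Eventually.of_forall fun θ _ =>
      ((hasFDerivAt_comp_add_right _).2
        (hdiff _ (hmem c hcmem _ (hcirc θ))).hasFDerivAt).const_smul (k θ))).2
  refine (hint.differentiableAt.const_smul (2 * Real.pi * Complex.I : ℂ)⁻¹).congr_of_eventuallyEq ?_
  filter_upwards [hnhds] with w hw using hcauchy w hw

end Holomorphic

section Wirtinger

variable {m : ℕ} {K : Type*} [NormedAddCommGroup K] [InnerProductSpace ℂ K]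

theorem DzV_eq_fderiv {E : Type*} [NormedAddCommGroup E] [NormedSpace ℂ E] {i : Fin m}
    {g : (Fin m → ℂ) → E} {z : Fin m → ℂ} (hg : DifferentiableAt ℂ g z) :
    DzV i g z = fderiv ℂ g z (Pi.single i 1) := by
  have hI : (Pi.single i Complex.I : Fin m → ℂ) = Complex.I • Pi.single i 1 := by
    rw [← Pi.single_smul, smul_eq_mul, mul_one]
  rw [DzV, hg.fderiv_restrictScalars ℝ, ContinuousLinearMap.coe_restrictScalars', hI, map_smul,
    smul_smul, Complex.I_mul_I, neg_one_smul, sub_neg_eq_add, ← two_smul ℂ, smul_smul]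
  norm_num

theorem fderiv_real_inner_apply {f g : (Fin m → ℂ) → K} {z : Fin m → ℂ}
    (hf : DifferentiableAt ℂ f z) (hg : DifferentiableAt ℂ g z) (v : Fin m → ℂ) :
    fderiv ℝ (fun w => ⟪f w, g w⟫) z v = ⟪f z, fderiv ℂ g z v⟫ + ⟪fderiv ℂ f z v, g z⟫ := by
  rw [fderiv_inner_apply ℂ (hf.restrictScalars ℝ) (hg.restrictScalars ℝ),
    hf.fderiv_restrictScalars ℝ, hg.fderiv_restrictScalars ℝ]
  rfl

theorem DzV_inner {f g : (Fin m → ℂ) → K} {z : Fin m → ℂ} (i : Fin m)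
    (hf : DifferentiableAt ℂ f z) (hg : DifferentiableAt ℂ g z) :
    DzV i (fun w => ⟪f w, g w⟫) z = ⟪f z, fderiv ℂ g z (Pi.single i 1)⟫ := by
  have hI : (Pi.single i Complex.I : Fin m → ℂ) = Complex.I • Pi.single i 1 := by
    rw [← Pi.single_smul, smul_eq_mul, mul_one]
  rw [DzV, fderiv_real_inner_apply hf hg, fderiv_real_inner_apply hf hg, hI, map_smul, map_smul,
    inner_smul_left, inner_smul_right, Complex.conj_I, smul_eq_mul, smul_eq_mul]
  linear_combination (1 / 2 * (⟪fderiv ℂ f z (Pi.single i 1), g z⟫ -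
    ⟪f z, fderiv ℂ g z (Pi.single i 1)⟫)) * Complex.I_mul_I

theorem DzbarV_inner {f g : (Fin m → ℂ) → K} {z : Fin m → ℂ} (j : Fin m)
    (hf : DifferentiableAt ℂ f z) (hg : DifferentiableAt ℂ g z) :
    DzbarV j (fun w => ⟪f w, g w⟫) z = ⟪fderiv ℂ f z (Pi.single j 1), g z⟫ := by
  have hI : (Pi.single j Complex.I : Fin m → ℂ) = Complex.I • Pi.single j 1 := by
    rw [← Pi.single_smul, smul_eq_mul, mul_one]
  rw [DzbarV, fderiv_real_inner_apply hf hg, fderiv_real_inner_apply hf hg, hI, map_smul, map_smul,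
    inner_smul_left, inner_smul_right, Complex.conj_I, smul_eq_mul, smul_eq_mul]
  linear_combination (1 / 2 * (⟪f z, fderiv ℂ g z (Pi.single j 1)⟫ -
    ⟪fderiv ℂ f z (Pi.single j 1), g z⟫)) * Complex.I_mul_I

end Wirtinger

/-- Curvature formula in several variables: for a holomorphic frame `s_1,…,s_n` on an open
`Ω ⊆ ℂ^m`, pointwise linearly independent, with metric `h`,
`∂²h/∂z̄_j∂z_i − (∂h/∂z̄_j)·h⁻¹·(∂h/∂z_i) = (det h)⁻¹·h_{ij}` on `Ω`. -/
theorem stmt10 {m n : ℕ} (Ω : Set (Fin m → ℂ)) (hΩ : IsOpen Ω)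
    (s : Fin n → (Fin m → ℂ) → H) (hs : ∀ p, DifferentiableOn ℂ (s p) Ω)
    (hnd : ∀ z ∈ Ω, LinearIndependent ℂ fun p => s p z) :
    ∀ i j : Fin m, ∀ z ∈ Ω,
      (Matrix.of fun p q : Fin n =>
          DzbarV j (fun w => DzV i (fun u => fGramV s u p q) w) z) -
        (Matrix.of fun p q : Fin n => DzbarV j (fun w => fGramV s w p q) z) *
          (fGramV s z)⁻¹ *
          (Matrix.of fun p q : Fin n => DzV i (fun w => fGramV s w p q) z) =
      ((fGramV s z).det)⁻¹ • hMatV s i j z := by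
  intro i j z hz
  have hd : ∀ p, ∀ w ∈ Ω, DifferentiableAt ℂ (s p) w := fun p w hw =>
    (hs p).differentiableAt (hΩ.mem_nhds hw)
  have hdet : (fGramV s z).det ≠ 0 :=
    Matrix.det_gram_ne_zero_iff_linearIndependent.2 (hnd z hz)
  have hDz : ∀ p q, DzV i (fun w => fGramV s w p q) z =
      ⟪s p z, fderiv ℂ (s q) z (Pi.single i 1)⟫ := fun p q =>
    DzV_inner i (hd p z hz) (hd q z hz)
  have hDzbar : ∀ p q, DzbarV j (fun w => fGramV s w p q) z =
      ⟪fderiv ℂ (s p) z (Pi.single j 1), s q z⟫ := fun p q =>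
    DzbarV_inner j (hd p z hz) (hd q z hz)
  have hDzbarDz : ∀ p q, DzbarV j (fun w => DzV i (fun u => fGramV s u p q) w) z =
      ⟪fderiv ℂ (s p) z (Pi.single j 1), fderiv ℂ (s q) z (Pi.single i 1)⟫ := by
    intro p q
    rw [← DzbarV_inner j (hd p z hz)
      (differentiableAt_fderiv_apply_of_differentiableOn hΩ (hs q) hz _)]
    have heq : (fun w => DzV i (fun u => fGramV s u p q) w) =ᶠ[nhds z]
        fun w => ⟪s p w, fderiv ℂ (s q) w (Pi.single i 1)⟫ := by
      filter_upwards [hΩ.mem_nhds hz] with w hw using DzV_inner i (hd p w hw) (hd q w hw)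
    rw [DzbarV, DzbarV, heq.fderiv_eq]
  let := Matrix.invertibleOfIsUnitDet (fGramV s z) hdet.isUnit
  ext p q
  have hblock : (Matrix.of fun a b : Fin n ⊕ Unit =>
      ⟪Sum.elim (fun r => s r z) (fun _ => DzV j (s p) z) a,
        Sum.elim (fun r => s r z) (fun _ => DzV i (s q) z) b⟫) =
      Matrix.fromBlocks (fGramV s z)
        (Matrix.of fun r _ => ⟪s r z, fderiv ℂ (s q) z (Pi.single i 1)⟫)
        (Matrix.of fun _ r => ⟪fderiv ℂ (s p) z (Pi.single j 1), s r z⟫)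
        (Matrix.of fun _ _ =>
          ⟪fderiv ℂ (s p) z (Pi.single j 1), fderiv ℂ (s q) z (Pi.single i 1)⟫) := by
    rw [DzV_eq_fderiv (hd p z hz), DzV_eq_fderiv (hd q z hz)]
    ext (a | a) (b | b) <;> rfl
  rw [Matrix.smul_apply, hMatV, Matrix.of_apply, hblock, Matrix.det_fromBlocks₁₁,
    smul_eq_mul, inv_mul_cancel_left₀ hdet, Matrix.det_unique, Matrix.invOf_eq_nonsing_inv]
  simp only [Matrix.sub_apply, Matrix.mul_apply, Matrix.of_apply, hDz, hDzbar, hDzbarDz]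
end
end

section
/- Let σ_1,…,σ_n : Ω → H be a k-nondegenerate holomorphic frame, k ≥ 1, with n ≥ 1. Then for every z ∈ Ω, det J_{k−1}h(z) / det J_k h(z) = (det h_k(z))^{−1} · ∏_{m=0}^{k−1} (det h_m(z))^{n·(1−n)^{k−1−m}}, where each det h_m(z) is a positive real number so that the (possibly negative) integer powers are well defined; explicitly, (det J_k h)^{−1}·det J_{k−1}h = (det h_0)^{n(1−n)^{k−1}}·(det h_1)^{n(1−n)^{k−2}} ⋯ (det h_{k−1})^{n}·(det h_k)^{−1}. -/
open Matrix

noncomputable section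

variable {H : Type*} [NormedAddCommGroup H] [InnerProductSpace ℂ H] [CompleteSpace H]

/-- `⟪x, y⟫` is the Mathlib inner product (conjugate-linear in the first argument);
it equals the paper's inner product `⟨y, x⟩`, which is linear in the first argument. -/
local notation "⟪" x ", " y "⟫" => (inner ℂ x y : ℂ)

/-- `Fin m × Fin n` together with one extra block `Fin n` is `Fin (m + 1) × Fin n`. -/
def blockEquiv (m n : ℕ) : (Fin m × Fin n) ⊕ Fin n ≃ Fin (m + 1) × Fin n :=
  (Equiv.sumCongr (Equiv.refl _) (Equiv.uniqueProd (Fin n) (Fin 1)).symm).trans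
    ((Equiv.sumProdDistrib (Fin m) (Fin 1) (Fin n)).symm.trans
      (Equiv.prodCongr finSumFinEquiv (Equiv.refl _)))

section JetGram

variable {E : Type*} [NormedAddCommGroup E] [InnerProductSpace ℂ E]

/-- The block column of inner products of the jets of order `< m` with the derivatives of
order `m`. -/
def jetCol {n : ℕ} (σ : Fin n → ℂ → E) (m : ℕ) (z : ℂ) : Matrix (Fin m × Fin n) (Fin n) ℂ :=
  Matrix.of fun p j => ⟪iteratedDeriv (p.1 : ℕ) (σ p.2) z, iteratedDeriv m (σ j) z⟫

/-- The Gram matrix of the derivatives of order `m`. -/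
def derivGram {n : ℕ} (σ : Fin n → ℂ → E) (m : ℕ) (z : ℂ) : Matrix (Fin n) (Fin n) ℂ :=
  Matrix.of fun i j => ⟪iteratedDeriv m (σ i) z, iteratedDeriv m (σ j) z⟫

/-- The Schur complement of `jGram σ m z` in `jGram σ (m + 1) z`. -/
def jetSchur {n : ℕ} (σ : Fin n → ℂ → E) (m : ℕ) (z : ℂ) : Matrix (Fin n) (Fin n) ℂ :=
  derivGram σ m z - (jetCol σ m z)ᴴ * (jGram σ m z)⁻¹ * jetCol σ m z

lemma jGram_succ_submatrix {n : ℕ} (σ : Fin n → ℂ → E) (m : ℕ) (z : ℂ) :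
    (jGram σ (m + 1) z).submatrix (blockEquiv m n) (blockEquiv m n) =
      Matrix.fromBlocks (jGram σ m z) (jetCol σ m z) (jetCol σ m z)ᴴ (derivGram σ m z) := by
  ext a b
  rcases a with a | a <;> rcases b with b | b <;>
    simp [jGram, blockEquiv, jetCol, derivGram]

lemma det_jGram_succ {n : ℕ} (σ : Fin n → ℂ → E) (m : ℕ) (z : ℂ)
    (hD : (jGram σ m z).det ≠ 0) :
    (jGram σ (m + 1) z).det = (jGram σ m z).det * (jetSchur σ m z).det := by
  have := (jGram σ m z).invertibleOfIsUnitDet (isUnit_iff_ne_zero.mpr hD)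
  rw [← Matrix.det_submatrix_equiv_self (blockEquiv m n), jGram_succ_submatrix,
    Matrix.det_fromBlocks₁₁, Matrix.invOf_eq_nonsing_inv, jetSchur]

lemma hMat_eq_smul_jetSchur {n : ℕ} (σ : Fin n → ℂ → E) (m : ℕ) (z : ℂ)
    (hD : (jGram σ m z).det ≠ 0) :
    hMat σ m z = (jGram σ m z).det • jetSchur σ m z := by
  have := (jGram σ m z).invertibleOfIsUnitDet (isUnit_iff_ne_zero.mpr hD)
  ext i j
  have hblock : (Matrix.of fun a b : (Fin m × Fin n) ⊕ Unit =>
      ⟪Sum.elim (fun lp : Fin m × Fin n => iteratedDeriv (lp.1 : ℕ) (σ lp.2) z)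
          (fun _ => iteratedDeriv m (σ i) z) a,
        Sum.elim (fun lp : Fin m × Fin n => iteratedDeriv (lp.1 : ℕ) (σ lp.2) z)
          (fun _ => iteratedDeriv m (σ j) z) b⟫) =
      Matrix.fromBlocks (jGram σ m z) ((jetCol σ m z).submatrix id fun _ : Unit => j)
        ((jetCol σ m z)ᴴ.submatrix (fun _ : Unit => i) id)
        ((derivGram σ m z).submatrix (fun _ : Unit => i) fun _ : Unit => j) := by
    ext a b
    rcases a with a | a <;> rcases b with b | b <;> simp [jGram, jetCol, derivGram]
  rw [hMat, Matrix.of_apply, hblock, Matrix.det_fromBlocks₁₁, Matrix.det_unique (n := Unit),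
    Matrix.invOf_eq_nonsing_inv, Matrix.smul_apply, smul_eq_mul, jetSchur]
  rfl

lemma det_hMat {n : ℕ} (σ : Fin n → ℂ → E) (m : ℕ) (z : ℂ) (hD : (jGram σ m z).det ≠ 0) :
    (hMat σ m z).det = (jGram σ m z).det ^ ((n : ℤ) - 1) * (jGram σ (m + 1) z).det := by
  rw [hMat_eq_smul_jetSchur σ m z hD, Matrix.det_smul, Fintype.card_fin, det_jGram_succ σ m z hD,
    ← mul_assoc, zpow_sub_one₀ hD, zpow_natCast, inv_mul_cancel_right₀ hD]

open ComplexOrder in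
lemma det_jGram_ne_zero {n : ℕ} (σ : Fin n → ℂ → E) {N M : ℕ} (hNM : N ≤ M) (z : ℂ)
    (hli : LinearIndependent ℂ fun p : Fin M × Fin n => iteratedDeriv (p.1 : ℕ) (σ p.2) z) :
    (jGram σ N z).det ≠ 0 := by
  have hli' : LinearIndependent ℂ
      fun p : Fin N × Fin n => iteratedDeriv (p.1 : ℕ) (σ p.2) z :=
    hli.comp (Prod.map (Fin.castLE hNM) id)
      ((Fin.castLE_injective hNM).prodMap Function.injective_id)
  exact (Matrix.posDef_gram_of_linearIndependent hli').det_pos.ne'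

end JetGram

/-- A sequence with `D 0 = 1` and `d m = D m ^ (n - 1) * D (m + 1)` is recovered from `d`. -/
lemma eq_prod_zpow_of_recurrence {K : Type*} [Field K] (n : ℤ) (D d : ℕ → K) (k : ℕ)
    (h0 : D 0 = 1) (hD : ∀ m < k, D m ≠ 0) (hd : ∀ m < k, d m = D m ^ (n - 1) * D (m + 1)) :
    D k = ∏ m ∈ Finset.range k, d m ^ ((1 - n) ^ (k - 1 - m)) := by
  induction k with
  | zero => simpa using h0
  | succ k ih =>
    have hDk := hD k k.lt_succ_self
    have hprod : ∏ m ∈ Finset.range k, d m ^ ((1 - n) ^ (k + 1 - 1 - m)) = D k ^ (1 - n) := by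
      rw [ih (fun m hm => hD m (by lia)) (fun m hm => hd m (by lia)), ← Finset.prod_zpow]
      refine Finset.prod_congr rfl fun m hm => ?_
      have hm := Finset.mem_range.mp hm
      rw [← _root_.zpow_mul, ← pow_succ]
      congr 2
      lia
    rw [Finset.prod_range_succ, hprod, hd k k.lt_succ_self]
    simp only [add_tsub_cancel_right, tsub_self, pow_zero, zpow_one]
    rw [← mul_assoc, ← zpow_add₀ hDk]
    simp

/-- `det J_{k−1}h / det J_k h
  = (det h_k)⁻¹ · ∏_{m=0}^{k−1} (det h_m)^{n·(1−n)^{k−1−m}}` on `Ω`. -/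
theorem stmt13 {n : ℕ} (Ω : Set ℂ) (hΩ : IsOpen Ω) (k : ℕ) (hk : 1 ≤ k) (hn : 1 ≤ n)
    (σ : Fin n → ℂ → H) (hσ : ∀ i, DifferentiableOn ℂ (σ i) Ω)
    (hnd : ∀ z ∈ Ω, LinearIndependent ℂ
      fun p : Fin (k + 1) × Fin n => iteratedDeriv (p.1 : ℕ) (σ p.2) z) :
    ∀ z ∈ Ω,
      (jGram σ k z).det / (jGram σ (k + 1) z).det =
        ((hMat σ k z).det)⁻¹ *
          ∏ m ∈ Finset.range k,
            (hMat σ m z).det ^ ((n : ℤ) * (1 - (n : ℤ)) ^ (k - 1 - m)) := by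
  intro z hz
  have hD : ∀ m ≤ k + 1, (jGram σ m z).det ≠ 0 := fun m hm =>
    det_jGram_ne_zero σ hm z (hnd z hz)
  have hDk := hD k (by lia)
  have hprod : ∏ m ∈ Finset.range k,
      (hMat σ m z).det ^ ((n : ℤ) * (1 - (n : ℤ)) ^ (k - 1 - m)) = (jGram σ k z).det ^ n := by
    rw [eq_prod_zpow_of_recurrence n (fun m => (jGram σ m z).det) (fun m => (hMat σ m z).det) k
      Matrix.det_isEmpty (fun m hm => hD m (by lia))
      (fun m hm => det_hMat σ m z (hD m (by lia))), ← Finset.prod_pow]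
    refine Finset.prod_congr rfl fun m _ => ?_
    rw [← zpow_natCast, ← _root_.zpow_mul, mul_comm]
  rw [hprod, det_hMat σ k z hDk, zpow_sub_one₀ hDk, zpow_natCast]
  have := hD (k + 1) le_rfl
  field_simp
end
end

section
/- Let σ_1,…,σ_n : Ω → H be a (k+1)-nondegenerate holomorphic frame, k ≥ 1. Then the curvature coefficient of the k-jet bundle K(z) := ∂/∂z̄ ( (J_k h)⁻¹ · ∂(J_k h)/∂z )(z), a (k+1)n×(k+1)n matrix, has rank at most n for every z ∈ Ω. -/
open Matrix

noncomputable section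

variable {H : Type*} [NormedAddCommGroup H] [InnerProductSpace ℂ H] [CompleteSpace H]

/-- `⟪x, y⟫` is the Mathlib inner product (conjugate-linear in the first argument);
it equals the paper's inner product `⟨y, x⟩`, which is linear in the first argument. -/
local notation "⟪" x ", " y "⟫" => (inner ℂ x y : ℂ)

theorem Dz_inner_of_hasDerivAt {E : Type*} [NormedAddCommGroup E] [InnerProductSpace ℂ E]
    {f g : ℂ → E} {f' g' : E} {z : ℂ} (hf : HasDerivAt f f' z) (hg : HasDerivAt g g' z) :
    Dz (fun w => ⟪f w, g w⟫) z = ⟪f z, g'⟫ := by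
  have hfg := (hf.hasFDerivAt.restrictScalars ℝ).inner ℂ (hg.hasFDerivAt.restrictScalars ℝ)
  have hI := Complex.I_mul_I
  simp only [Dz, hfg.fderiv, ContinuousLinearMap.comp_apply, ContinuousLinearMap.prod_apply,
    fderivInnerCLM_apply, ContinuousLinearMap.coe_restrictScalars',
    ContinuousLinearMap.toSpanSingleton_apply, one_smul, inner_smul_left, inner_smul_right,
    Complex.conj_I, smul_eq_mul]
  linear_combination (1 / 2 * (⟪f', g z⟫ - ⟪f z, g'⟫)) * hI

theorem Dzbar_eq_zero_of_eventuallyEq_const {E : Type*} [NormedAddCommGroup E] [NormedSpace ℂ E]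
    {g : ℂ → E} {c : E} {z : ℂ} (h : g =ᶠ[nhds z] fun _ => c) : Dzbar g z = 0 := by
  simp [Dzbar, h.fderiv_eq]

theorem hasDerivAt_iteratedDeriv_of_differentiableOn {E : Type*} [NormedAddCommGroup E]
    [NormedSpace ℂ E] [CompleteSpace E] {f : ℂ → E} {Ω : Set ℂ} (hΩ : IsOpen Ω)
    (hf : DifferentiableOn ℂ f Ω) (m : ℕ) {z : ℂ} (hz : z ∈ Ω) :
    HasDerivAt (iteratedDeriv m f) (iteratedDeriv (m + 1) f z) z := by
  have hd : AnalyticAt ℂ (iteratedDeriv m f) z := by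
    rw [iteratedDeriv_eq_iterate]
    exact (hf.analyticAt (hΩ.mem_nhds hz)).iterated_deriv m
  rw [iteratedDeriv_succ]
  exact hd.differentiableAt.hasDerivAt

/-- A matrix all of whose columns outside the image of `c` vanish has rank at most the
cardinality of the source of `c`. -/
theorem rank_le_card_of_col_eq_zero {ι κ γ : Type*} [Fintype ι] [Fintype κ] [Fintype γ]
    (M : Matrix ι κ ℂ) (c : γ → κ) (hM : ∀ q, q ∉ Set.range c → M.col q = 0) :
    M.rank ≤ Fintype.card γ := by
  rw [rank_eq_finrank_span_cols]
  refine le_trans (Submodule.finrank_mono (Submodule.span_le.2 ?_))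
    (finrank_range_le_card (R := ℂ) fun i => M.col (c i))
  rintro _ ⟨q, rfl⟩
  by_cases hq : q ∈ Set.range c
  · obtain ⟨i, rfl⟩ := hq
    exact Submodule.subset_span ⟨i, rfl⟩
  · rw [hM q hq]
    exact zero_mem _

/-- Every column of the Gram matrix of a jet other than those of top order is differentiated by
`∂/∂z` to the column one order higher. -/
theorem mDz_jGram_apply_of_lt {n : ℕ} {Ω : Set ℂ} (hΩ : IsOpen Ω) {σ : Fin n → ℂ → H}
    (hσ : ∀ i, DifferentiableOn ℂ (σ i) Ω) {N m : ℕ} (hm : m + 1 < N) (j : Fin n)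
    {z : ℂ} (hz : z ∈ Ω) (p : Fin N × Fin n) :
    mDz (jGram σ N) z p (⟨m, m.lt_succ_self.trans hm⟩, j) = jGram σ N z p (⟨m + 1, hm⟩, j) :=
  Dz_inner_of_hasDerivAt (hasDerivAt_iteratedDeriv_of_differentiableOn hΩ (hσ p.2) p.1 hz)
    (hasDerivAt_iteratedDeriv_of_differentiableOn hΩ (hσ j) m hz)

/-- The curvature coefficient `∂/∂z̄((J_k h)⁻¹·∂(J_k h)/∂z)(z)` of the `k`-jet bundle of a
`(k+1)`-nondegenerate holomorphic frame of rank `n` has rank at most `n` at every `z ∈ Ω`. -/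
theorem stmt15 {n : ℕ} (Ω : Set ℂ) (hΩ : IsOpen Ω) (k : ℕ) (hk : 1 ≤ k)
    (σ : Fin n → ℂ → H) (hσ : ∀ i, DifferentiableOn ℂ (σ i) Ω)
    (hnd : ∀ z ∈ Ω, LinearIndependent ℂ
      fun p : Fin (k + 2) × Fin n => iteratedDeriv (p.1 : ℕ) (σ p.2) z) :
    ∀ z ∈ Ω,
      (mDzbar (fun w => (jGram σ (k + 1) w)⁻¹ * mDz (jGram σ (k + 1)) w) z).rank ≤ n := by
  intro z hz
  have hdet (w : ℂ) (hw : w ∈ Ω) : IsUnit (jGram σ (k + 1) w).det := by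
    have hli := (hnd w hw).comp (Prod.map (Fin.castSucc (n := k + 1)) id)
      ((Fin.castSucc_injective _).prodMap Function.injective_id)
    exact isUnit_iff_ne_zero.2 (det_gram_ne_zero_iff_linearIndependent.2 hli)
  refine (rank_le_card_of_col_eq_zero _ (fun i : Fin n => (Fin.last k, i)) ?_).trans_eq
    (Fintype.card_fin n)
  rintro ⟨⟨m, hm⟩, j⟩ hq
  have hmk : m + 1 < k + 1 := by
    by_contra hmk
    exact hq ⟨j, Prod.ext (Fin.ext (by simp; omega)) rfl⟩
  ext p
  refine Dzbar_eq_zero_of_eventuallyEq_const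
    (c := (1 : Matrix (Fin (k + 1) × Fin n) (Fin (k + 1) × Fin n) ℂ) p
      (⟨m + 1, hmk⟩, j)) ?_
  filter_upwards [hΩ.mem_nhds hz] with w hw
  rw [← nonsing_inv_mul _ (hdet w hw), mul_apply, mul_apply]
  exact Finset.sum_congr rfl fun r _ => by rw [mDz_jGram_apply_of_lt hΩ hσ hmk j hw r]
end
end
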